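/- Characterisation of CBN and CBV normalisation: for every term t of the λ-calculus with explicit substitutions, (1) t is typable in system N if and only if t is →n-normalising; moreover, if Φ derives Γ ⊢ t : τ in N and t →n* p with p a →n-normal form reached in b dB-steps and e s-steps, then |Φ|_n ≥ b + e + |p|_n; (2) t is typable in system V if and only if t is →v-normalising; moreover, if Φ derives Γ ⊢ t : τ in V and t →v* p with p a →v-normal form reached in b dB-steps and e sv-steps, then |Φ|_v ≥ b + e + |p|_v. -/

import Mathlib

/-! # The Bang Calculus Revisited: common definitions.

Terms are represented with de Bruijn indices, so that all the meta-level
substitutions are capture-avoiding by construction. -/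

/-- Terms of the λ!-calculus.  `esub t u` is the explicit substitution
`t[0\u]`: the (anonymous) binder scopes over `t`, not over `u`. -/
inductive Tm : Type
  | var : ℕ → Tm
  | app : Tm → Tm → Tm
  | lam : Tm → Tm
  | bang : Tm → Tm
  | der : Tm → Tm
  | esub : Tm → Tm → Tm
  deriving DecidableEq

namespace Tm

/-- lifting a renaming under a binder -/
def liftR (f : ℕ → ℕ) : ℕ → ℕ
  | 0 => 0
  | k + 1 => f k + 1

/-- renaming of free variables -/
def rename (f : ℕ → ℕ) : Tm → Tm
  | var k => var (f k)
  | app t u => app (rename f t) (rename f u)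
  | lam t => lam (rename (liftR f) t)
  | bang t => bang (rename f t)
  | der t => der (rename f t)
  | esub t u => esub (rename (liftR f) t) (rename f u)

/-- lifting a simultaneous substitution under a binder -/
def liftS (σ : ℕ → Tm) : ℕ → Tm
  | 0 => var 0
  | k + 1 => rename (· + 1) (σ k)

/-- simultaneous (capture-avoiding) substitution -/
def subst (σ : ℕ → Tm) : Tm → Tm
  | var k => σ k
  | app t u => app (subst σ t) (subst σ u)
  | lam t => lam (subst (liftS σ) t)
  | bang t => bang (subst σ t)
  | der t => der (subst σ t)
  | esub t u => esub (subst (liftS σ) t) (subst σ u)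

/-- capture-avoiding substitution of `u` for the variable `0` of `t`,
where the result is placed under `n` extra binders (and `u` already lives
at that depth). -/
def substIn (n : ℕ) (u : Tm) (t : Tm) : Tm :=
  subst (fun k => match k with
    | 0 => u
    | k + 1 => var (k + n)) t

/-- capture-avoiding meta-level substitution `t{0 := u}` -/
def subst0 (u : Tm) (t : Tm) : Tm := substIn 0 u t

/-- plugging a term into a list context `L ::= ◻ | L[x\t]`; the head of the
list is the argument of the outermost explicit substitution. -/
def plug : List Tm → Tm → Tm
  | [], s => s
  | e :: L, s => esub (plug L s) e

/-- the w-size of a term -/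
def wsize : Tm → ℕ
  | var _ => 0
  | app t u => 1 + wsize t + wsize u
  | lam t => 1 + wsize t
  | bang _ => 0
  | der t => 1 + wsize t
  | esub t u => 1 + wsize t + wsize u

end Tm

/-- the names of the three rewriting rules of the λ!-calculus -/
inductive Rule : Type
  | dB | sb | db
  deriving DecidableEq

open Tm in
/-- the three rewriting rules, applied at the root (at a distance) -/
inductive Root : Rule → Tm → Tm → Prop
  | dB (L : List Tm) (t u : Tm) :
      Root .dB (app (plug L (lam t)) u)
               (plug L (esub t (rename (· + L.length) u)))
  | sb (L : List Tm) (t u : Tm) :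
      Root .sb (esub t (plug L (bang u))) (plug L (substIn L.length u t))
  | db (L : List Tm) (t : Tm) :
      Root .db (der (plug L (bang t))) (plug L t)

/-- closure of each rule under weak contexts (no reduction under `bang`) -/
inductive Step : Rule → Tm → Tm → Prop
  | root {r : Rule} {t t' : Tm} : Root r t t' → Step r t t'
  | appL {r t t'} (u : Tm) : Step r t t' → Step r (Tm.app t u) (Tm.app t' u)
  | appR {r u u'} (t : Tm) : Step r u u' → Step r (Tm.app t u) (Tm.app t u')
  | lam {r t t'} : Step r t t' → Step r (Tm.lam t) (Tm.lam t')
  | der {r t t'} : Step r t t' → Step r (Tm.der t) (Tm.der t')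
  | esubL {r t t'} (u : Tm) : Step r t t' → Step r (Tm.esub t u) (Tm.esub t' u)
  | esubR {r u u'} (t : Tm) : Step r u u' → Step r (Tm.esub t u) (Tm.esub t u')

/-- the weak reduction `→w` of the λ!-calculus -/
def StepW (t t' : Tm) : Prop := ∃ r, Step r t t'

/-- counted weak reduction: `RedCnt t (b, e) u` holds iff `t →w* u` using `b`
dB-steps and `e` steps of kind s!/d!. -/
inductive RedCnt : Tm → ℕ × ℕ → Tm → Prop
  | refl (t : Tm) : RedCnt t (0, 0) t
  | db {t t₁ u : Tm} {b e : ℕ} :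
      Step .dB t t₁ → RedCnt t₁ (b, e) u → RedCnt t (b + 1, e) u
  | ex {t t₁ u : Tm} {b e : ℕ} :
      (Step .sb t t₁ ∨ Step .db t t₁) → RedCnt t₁ (b, e) u →
      RedCnt t (b, e + 1) u

mutual
  /-- neutral w-normal terms -/
  inductive NeW : Tm → Prop
    | var (k : ℕ) : NeW (Tm.var k)
    | app {t u : Tm} : NaW t → NoW u → NeW (Tm.app t u)
    | der {t : Tm} : NbW t → NeW (Tm.der t)
    | esub {t u : Tm} : NeW t → NbW u → NeW (Tm.esub t u)
  /-- neutral-abs w-normal terms -/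
  inductive NaW : Tm → Prop
    | bang (t : Tm) : NaW (Tm.bang t)
    | ne {t : Tm} : NeW t → NaW t
    | esub {t u : Tm} : NaW t → NbW u → NaW (Tm.esub t u)
  /-- neutral-bang w-normal terms -/
  inductive NbW : Tm → Prop
    | ne {t : Tm} : NeW t → NbW t
    | lam {t : Tm} : NoW t → NbW (Tm.lam t)
    | esub {t u : Tm} : NbW t → NbW u → NbW (Tm.esub t u)
  /-- w-normal terms -/
  inductive NoW : Tm → Prop
    | na {t : Tm} : NaW t → NoW t
    | nb {t : Tm} : NbW t → NoW t
end

/-- clashes -/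
inductive Clash : Tm → Prop
  | appBang (L : List Tm) (t u : Tm) : Clash (Tm.app (Tm.plug L (Tm.bang t)) u)
  | esubLam (L : List Tm) (t u : Tm) : Clash (Tm.esub t (Tm.plug L (Tm.lam u)))
  | derLam (L : List Tm) (u : Tm) : Clash (Tm.der (Tm.plug L (Tm.lam u)))
  | appLam (L : List Tm) (t u : Tm) : Clash (Tm.app t (Tm.plug L (Tm.lam u)))

/-- `WSub t s` holds iff `t = W⟨s⟩` for some weak context `W` -/
inductive WSub : Tm → Tm → Prop
  | refl (t : Tm) : WSub t t
  | appL {t s : Tm} (u : Tm) : WSub t s → WSub (Tm.app t u) s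
  | appR {u s : Tm} (t : Tm) : WSub u s → WSub (Tm.app t u) s
  | lam {t s : Tm} : WSub t s → WSub (Tm.lam t) s
  | der {t s : Tm} : WSub t s → WSub (Tm.der t) s
  | esubL {t s : Tm} (u : Tm) : WSub t s → WSub (Tm.esub t u) s
  | esubR {u s : Tm} (t : Tm) : WSub u s → WSub (Tm.esub t u) s

/-- weak clash freeness -/
def Wcf (t : Tm) : Prop := ¬ ∃ s, WSub t s ∧ Clash s

mutual
  /-- neutral weak clash free normal terms -/
  inductive NeCF : Tm → Prop
    | var (k : ℕ) : NeCF (Tm.var k)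
    | app {t u : Tm} : NeCF t → NaCF u → NeCF (Tm.app t u)
    | der {t : Tm} : NeCF t → NeCF (Tm.der t)
    | esub {t u : Tm} : NeCF t → NeCF u → NeCF (Tm.esub t u)
  /-- neutral-abs weak clash free normal terms -/
  inductive NaCF : Tm → Prop
    | bang (t : Tm) : NaCF (Tm.bang t)
    | ne {t : Tm} : NeCF t → NaCF t
    | esub {t u : Tm} : NaCF t → NeCF u → NaCF (Tm.esub t u)
  /-- neutral-bang weak clash free normal terms -/
  inductive NbCF : Tm → Prop
    | ne {t : Tm} : NeCF t → NbCF t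
    | lam {t : Tm} : NoCF t → NbCF (Tm.lam t)
    | esub {t u : Tm} : NbCF t → NeCF u → NbCF (Tm.esub t u)
  /-- weak clash free normal terms -/
  inductive NoCF : Tm → Prop
    | na {t : Tm} : NaCF t → NoCF t
    | nb {t : Tm} : NbCF t → NoCF t
end

/-- Types of system 𝒰: base types, multiset types and arrow types.  A
multiset type is given by a list of types (a representative of the multiset
it determines). -/
inductive Ty : Type
  | base : ℕ → Ty
  | mult : List Ty → Ty
  | arr : List Ty → Ty → Ty

/-- typing contexts: functions from (de Bruijn) variables to multiset types -/
abbrev Ctx := ℕ → Multiset Ty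

/-- the context mapping `k` to `M` and anything else to the empty multiset -/
def Ctx.single (k : ℕ) (M : Multiset Ty) : Ctx := fun j => if j = k then M else 0

/-- removing the (type of the) bound variable `0` from a context -/
def Ctx.tail (Γ : Ctx) : Ctx := fun k => Γ (k + 1)

/-- extending a context with a multiset type for a fresh variable `0` -/
def Ctx.cons (M : Multiset Ty) (Γ : Ctx) : Ctx := fun k =>
  match k with
  | 0 => M
  | k + 1 => Γ k

/-- Sized typing of system 𝒰: `DerU Γ t τ n` means that there is a derivation
of `Γ ⊢ t : τ` whose size (number of rules, not counting `bg`) is `n`. -/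
inductive DerU : Ctx → Tm → Ty → ℕ → Prop
  | ax (k : ℕ) (σ : Ty) : DerU (Ctx.single k {σ}) (Tm.var k) σ 1
  | app {Γ Δ : Ctx} {t u : Tm} {M : List Ty} {τ : Ty} {n m : ℕ} :
      DerU Γ t (Ty.arr M τ) n → DerU Δ u (Ty.mult M) m →
      DerU (Γ + Δ) (Tm.app t u) τ (n + m + 1)
  | abs {Γ : Ctx} {t : Tm} {τ : Ty} {n : ℕ} (M : List Ty) :
      DerU Γ t τ n → Multiset.ofList M = Γ 0 →
      DerU (Ctx.tail Γ) (Tm.lam t) (Ty.arr M τ) (n + 1)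
  | es {Γ Δ : Ctx} {t u : Tm} {σ : Ty} {M : List Ty} {n m : ℕ} :
      DerU Γ t σ n → DerU Δ u (Ty.mult M) m → Multiset.ofList M = Γ 0 →
      DerU (Ctx.tail Γ + Δ) (Tm.esub t u) σ (n + m + 1)
  | bg {t : Tm} (prs : List (Ctx × Ty × ℕ)) :
      (∀ p ∈ prs, DerU p.1 t p.2.1 p.2.2) →
      DerU ((prs.map (·.1)).sum) (Tm.bang t)
           (Ty.mult (prs.map (·.2.1))) ((prs.map (·.2.2)).sum)
  | dr {Γ : Ctx} {t : Tm} {σ : Ty} {n : ℕ} :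
      DerU Γ t (Ty.mult [σ]) n → DerU Γ (Tm.der t) σ (n + 1)

/-! ## The source λ-calculus with explicit substitutions (CBN / CBV) -/

/-- terms of the λ-calculus with explicit substitutions (de Bruijn) -/
inductive Lm : Type
  | var : ℕ → Lm
  | app : Lm → Lm → Lm
  | lam : Lm → Lm
  | esub : Lm → Lm → Lm
  deriving DecidableEq

namespace Lm

def liftR (f : ℕ → ℕ) : ℕ → ℕ
  | 0 => 0
  | k + 1 => f k + 1

def rename (f : ℕ → ℕ) : Lm → Lm
  | var k => var (f k)
  | app t u => app (rename f t) (rename f u)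
  | lam t => lam (rename (liftR f) t)
  | esub t u => esub (rename (liftR f) t) (rename f u)

def liftS (σ : ℕ → Lm) : ℕ → Lm
  | 0 => var 0
  | k + 1 => rename (· + 1) (σ k)

def subst (σ : ℕ → Lm) : Lm → Lm
  | var k => σ k
  | app t u => app (subst σ t) (subst σ u)
  | lam t => lam (subst (liftS σ) t)
  | esub t u => esub (subst (liftS σ) t) (subst σ u)

def substIn (n : ℕ) (u : Lm) (t : Lm) : Lm :=
  subst (fun k => match k with
    | 0 => u
    | k + 1 => var (k + n)) t

/-- capture-avoiding meta-level substitution `t{0 := u}` -/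
def subst0 (u : Lm) (t : Lm) : Lm := substIn 0 u t

def plug : List Lm → Lm → Lm
  | [], s => s
  | e :: L, s => esub (plug L s) e

/-- values -/
def IsVal : Lm → Prop
  | var _ => True
  | lam _ => True
  | _ => False

/-- the n-size of a term -/
def nsize : Lm → ℕ
  | var _ => 0
  | lam t => 1 + nsize t
  | app t _ => 1 + nsize t
  | esub t _ => 1 + nsize t

/-- the v-size of a term -/
def vsize : Lm → ℕ
  | var _ => 0
  | lam _ => 0
  | app t u => 1 + vsize t + vsize u
  | esub t u => 1 + vsize t + vsize u

end Lm

/-- names of the CBN rules -/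
inductive NRule : Type
  | dB | s
  deriving DecidableEq

/-- call-by-name reduction (closure of dB and s under CBN contexts) -/
inductive StepN : NRule → Lm → Lm → Prop
  | dB (L : List Lm) (t u : Lm) :
      StepN .dB (Lm.app (Lm.plug L (Lm.lam t)) u)
                (Lm.plug L (Lm.esub t (Lm.rename (· + L.length) u)))
  | s (t u : Lm) : StepN .s (Lm.esub t u) (Lm.subst0 u t)
  | appL {r t t'} (u : Lm) : StepN r t t' → StepN r (Lm.app t u) (Lm.app t' u)
  | lam {r t t'} : StepN r t t' → StepN r (Lm.lam t) (Lm.lam t')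
  | esubL {r t t'} (u : Lm) : StepN r t t' → StepN r (Lm.esub t u) (Lm.esub t' u)

/-- names of the CBV rules -/
inductive VRule : Type
  | dB | sv
  deriving DecidableEq

/-- call-by-value reduction (closure of dB and sv under CBV contexts) -/
inductive StepV : VRule → Lm → Lm → Prop
  | dB (L : List Lm) (t u : Lm) :
      StepV .dB (Lm.app (Lm.plug L (Lm.lam t)) u)
                (Lm.plug L (Lm.esub t (Lm.rename (· + L.length) u)))
  | sv (L : List Lm) (t v : Lm) (hv : Lm.IsVal v) :
      StepV .sv (Lm.esub t (Lm.plug L v)) (Lm.plug L (Lm.substIn L.length v t))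
  | appL {r t t'} (u : Lm) : StepV r t t' → StepV r (Lm.app t u) (Lm.app t' u)
  | appR {r u u'} (t : Lm) : StepV r u u' → StepV r (Lm.app t u) (Lm.app t u')
  | esubL {r t t'} (u : Lm) : StepV r t t' → StepV r (Lm.esub t u) (Lm.esub t' u)
  | esubR {r u u'} (t : Lm) : StepV r u u' → StepV r (Lm.esub t u) (Lm.esub t u')

mutual
  /-- CBN neutral terms -/
  inductive NeN : Lm → Prop
    | var (k : ℕ) : NeN (Lm.var k)
    | app {t : Lm} (u : Lm) : NeN t → NeN (Lm.app t u)
  /-- CBN normal terms -/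
  inductive NoN : Lm → Prop
    | lam {t : Lm} : NoN t → NoN (Lm.lam t)
    | ne {t : Lm} : NeN t → NoN t
end

mutual
  /-- CBV (substituted) variables -/
  inductive VrV : Lm → Prop
    | var (k : ℕ) : VrV (Lm.var k)
    | esub {t u : Lm} : VrV t → NeV u → VrV (Lm.esub t u)
  /-- CBV neutral terms -/
  inductive NeV : Lm → Prop
    | app₁ {t u : Lm} : VrV t → NoV u → NeV (Lm.app t u)
    | app₂ {t u : Lm} : NeV t → NoV u → NeV (Lm.app t u)
    | esub {t u : Lm} : NeV t → NeV u → NeV (Lm.esub t u)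
  /-- CBV normal terms -/
  inductive NoV : Lm → Prop
    | lam (t : Lm) : NoV (Lm.lam t)
    | vr {t : Lm} : VrV t → NoV t
    | ne {t : Lm} : NeV t → NoV t
    | esub {t u : Lm} : NoV t → NeV u → NoV (Lm.esub t u)
end

/-- counted CBN reduction, recording the number of dB- and s-steps -/
inductive RedCntN : Lm → ℕ × ℕ → Lm → Prop
  | refl (t : Lm) : RedCntN t (0, 0) t
  | db {t t₁ u : Lm} {b e : ℕ} :
      StepN .dB t t₁ → RedCntN t₁ (b, e) u → RedCntN t (b + 1, e) u
  | s {t t₁ u : Lm} {b e : ℕ} :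
      StepN .s t t₁ → RedCntN t₁ (b, e) u → RedCntN t (b, e + 1) u

/-- counted CBV reduction, recording the number of dB- and sv-steps -/
inductive RedCntV : Lm → ℕ × ℕ → Lm → Prop
  | refl (t : Lm) : RedCntV t (0, 0) t
  | db {t t₁ u : Lm} {b e : ℕ} :
      StepV .dB t t₁ → RedCntV t₁ (b, e) u → RedCntV t (b + 1, e) u
  | sv {t t₁ u : Lm} {b e : ℕ} :
      StepV .sv t t₁ → RedCntV t₁ (b, e) u → RedCntV t (b, e + 1) u

/-- the CBN embedding into the λ!-calculus -/
def cbn : Lm → Tm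
  | .var k => .var k
  | .lam t => .lam (cbn t)
  | .app t u => .app (cbn t) (.bang (cbn u))
  | .esub t u => .esub (cbn t) (.bang (cbn u))

/-- `deBang t = some s'` iff `t = L⟨!s⟩` and `s' = L⟨s⟩` -/
def deBang : Tm → Option Tm
  | .bang s => some s
  | .esub t e => (deBang t).map (fun s => Tm.esub s e)
  | _ => none

/-- the CBV embedding into the λ!-calculus -/
def cbv : Lm → Tm
  | .var k => .bang (.var k)
  | .lam t => .bang (.lam (cbv t))
  | .app t u =>
      match deBang (cbv t) with
      | some r => Tm.app r (cbv u)
      | none => Tm.app (.der (cbv t)) (cbv u)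
  | .esub t u => .esub (cbv t) (cbv u)

/-- Sized typing of system 𝒩 (call-by-name): `DerN Γ t τ n` means that there
is a derivation of `Γ ⊢ t : τ` of size `n` (counting all rules). -/
inductive DerN : Ctx → Lm → Ty → ℕ → Prop
  | ax (k : ℕ) (σ : Ty) : DerN (Ctx.single k {σ}) (Lm.var k) σ 1
  | app {Γ : Ctx} {t u : Lm} {τ : Ty} {n : ℕ} (prs : List (Ctx × Ty × ℕ)) :
      DerN Γ t (Ty.arr (prs.map (·.2.1)) τ) n →
      (∀ p ∈ prs, DerN p.1 u p.2.1 p.2.2) →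
      DerN (Γ + (prs.map (·.1)).sum) (Lm.app t u) τ
           (n + (prs.map (·.2.2)).sum + 1)
  | abs {Γ : Ctx} {t : Lm} {τ : Ty} {n : ℕ} (M : List Ty) :
      DerN Γ t τ n → Multiset.ofList M = Γ 0 →
      DerN (Ctx.tail Γ) (Lm.lam t) (Ty.arr M τ) (n + 1)
  | es {Γ : Ctx} {t u : Lm} {τ : Ty} {n : ℕ} (prs : List (Ctx × Ty × ℕ)) :
      DerN Γ t τ n →
      Multiset.ofList (prs.map (·.2.1)) = Γ 0 →
      (∀ p ∈ prs, DerN p.1 u p.2.1 p.2.2) →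
      DerN (Ctx.tail Γ + (prs.map (·.1)).sum) (Lm.esub t u) τ
           (n + (prs.map (·.2.2)).sum + 1)

/-- Sized typing of system 𝒱 (call-by-value): `DerV Γ t τ n` means that there
is a derivation of `Γ ⊢ t : τ` of size `n` (each rule counts 1, except that
`ax` counts the cardinal of its multiset and `abs` contributes the sizes of
its premises plus the number of premises). -/
inductive DerV : Ctx → Lm → Ty → ℕ → Prop
  | ax (k : ℕ) (M : List Ty) :
      DerV (Ctx.single k (Multiset.ofList M)) (Lm.var k) (Ty.mult M) M.length
  | es {Γ Δ : Ctx} {t u : Lm} {σ : Ty} {M : List Ty} {n m : ℕ} :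
      DerV Γ t σ n → DerV Δ u (Ty.mult M) m → Multiset.ofList M = Γ 0 →
      DerV (Ctx.tail Γ + Δ) (Lm.esub t u) σ (n + m + 1)
  | abs {t : Lm} (prs : List (Ctx × List Ty × Ty × ℕ)) :
      (∀ p ∈ prs, DerV p.1 t p.2.2.1 p.2.2.2) →
      (∀ p ∈ prs, Multiset.ofList p.2.1 = p.1 0) →
      DerV ((prs.map (fun p => Ctx.tail p.1)).sum) (Lm.lam t)
           (Ty.mult (prs.map (fun p => Ty.arr p.2.1 p.2.2.1)))
           ((prs.map (·.2.2.2)).sum + prs.length)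
  | app {Γ Δ : Ctx} {t u : Lm} {M : List Ty} {τ : Ty} {n m : ℕ} :
      DerV Γ t (Ty.mult [Ty.arr M τ]) n → DerV Δ u (Ty.mult M) m →
      DerV (Γ + Δ) (Lm.app t u) τ (n + m + 1)


namespace NV
open Lm

/-! ### contexts -/

@[simp] theorem tail_add (Γ Δ : Ctx) : Ctx.tail (Γ + Δ) = Ctx.tail Γ + Ctx.tail Δ := rfl
@[simp] theorem tail_zero : Ctx.tail 0 = 0 := rfl
@[simp] theorem tail_cons (M : Multiset Ty) (Γ : Ctx) : Ctx.tail (Ctx.cons M Γ) = Γ := rfl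
@[simp] theorem cons_zero_apply (M : Multiset Ty) (Γ : Ctx) : Ctx.cons M Γ 0 = M := rfl
theorem cons_tail (Γ : Ctx) : Ctx.cons (Γ 0) (Ctx.tail Γ) = Γ := by
  funext k; cases k <;> rfl
theorem cons_tail' {Γ : Ctx} {M} (h : Γ 0 = M) : Γ = Ctx.cons M (Ctx.tail Γ) := by
  rw [← h, cons_tail]
@[simp] theorem cons_zero_zero : Ctx.cons 0 0 = 0 := by
  funext k; cases k <;> rfl
theorem cons_add (M N : Multiset Ty) (Γ Δ : Ctx) :
    Ctx.cons (M + N) (Γ + Δ) = Ctx.cons M Γ + Ctx.cons N Δ := by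
  funext k; cases k <;> rfl
theorem cons_split (M : Multiset Ty) (Γ : Ctx) :
    Ctx.cons M Γ = Ctx.cons M 0 + Ctx.cons 0 Γ := by
  rw [← cons_add]; simp
@[simp] theorem tail_single_zero (M : Multiset Ty) : Ctx.tail (Ctx.single 0 M) = 0 := by
  funext k; simp [Ctx.tail, Ctx.single]
@[simp] theorem tail_single_succ (k) (M : Multiset Ty) :
    Ctx.tail (Ctx.single (k+1) M) = Ctx.single k M := by
  funext j; simp [Ctx.tail, Ctx.single]
@[simp] theorem single_zero_zero (M : Multiset Ty) : Ctx.single 0 M 0 = M := by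
  simp [Ctx.single]
@[simp] theorem single_succ_zero (k) (M : Multiset Ty) : Ctx.single (k+1) M 0 = 0 := by
  simp [Ctx.single]
theorem cons_zero_single (k) (M : Multiset Ty) :
    Ctx.cons 0 (Ctx.single k M) = Ctx.single (k+1) M := by
  rw [← tail_single_succ, ← single_succ_zero k M, cons_tail]
theorem cons_eq_single (M : Multiset Ty) : Ctx.cons M 0 = Ctx.single 0 M := by
  funext k; cases k <;> simp [Ctx.cons, Ctx.single]
theorem single_add (k) (M N : Multiset Ty) :
    Ctx.single k (M + N) = Ctx.single k M + Ctx.single k N := by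
  funext j; by_cases h : j = k <;> simp [Ctx.single, h]
@[simp] theorem single_empty (k) : Ctx.single k 0 = 0 := by
  funext j; simp [Ctx.single]
@[simp] theorem single_self (k) (M : Multiset Ty) : Ctx.single k M k = M := by
  simp [Ctx.single]

theorem mem_split {Γ : Ctx} {k τ} (h : τ ∈ Γ k) : ∃ Γ', Γ = Γ' + Ctx.single k {τ} := by
  obtain ⟨s, hs⟩ := Multiset.exists_cons_of_mem h
  refine ⟨Function.update Γ k s, ?_⟩
  funext j
  by_cases hj : j = k
  · subst hj
    simp only [Pi.add_apply, Function.update_self, single_self, hs]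
    rw [add_comm, Multiset.singleton_add]
  · simp [Ctx.single, hj]

/-! ### lists of derivations -/

inductive Many (P : Ctx → Ty → ℕ → Prop) : List Ty → Ctx → ℕ → Prop
  | nil : Many P [] 0 0
  | cons {D τ n M Γ m} : P D τ n → Many P M Γ m → Many P (τ :: M) (D + Γ) (n + m)

theorem many_iff {P : Ctx → Ty → ℕ → Prop} {M Γ n} : Many P M Γ n ↔
    ∃ prs : List (Ctx × Ty × ℕ), (∀ p ∈ prs, P p.1 p.2.1 p.2.2) ∧
      M = prs.map (·.2.1) ∧ Γ = (prs.map (·.1)).sum ∧ n = (prs.map (·.2.2)).sum := by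
  constructor
  · intro h
    induction h with
    | nil => exact ⟨[], by simp⟩
    | @cons D τ n M Γ m h _ ih =>
      obtain ⟨prs, h1, rfl, rfl, rfl⟩ := ih
      exact ⟨(D, τ, n) :: prs, by simpa using ⟨h, by simpa using h1⟩, by simp, by simp, by simp⟩
  · rintro ⟨prs, h1, rfl, rfl, rfl⟩
    induction prs with
    | nil => exact .nil
    | cons p prs ih =>
      simp only [List.map_cons, List.sum_cons]
      exact .cons (h1 p (by simp)) (ih (fun q hq => h1 q (by simp [hq])))

theorem many_nil_iff {P : Ctx → Ty → ℕ → Prop} {Γ n} : Many P [] Γ n ↔ Γ = 0 ∧ n = 0 := by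
  constructor
  · intro h; cases h; simp
  · rintro ⟨rfl, rfl⟩; exact .nil

theorem many_cons_iff {P : Ctx → Ty → ℕ → Prop} {τ M Γ' n'} : Many P (τ :: M) Γ' n' ↔
    ∃ D n Γ m, P D τ n ∧ Many P M Γ m ∧ Γ' = D + Γ ∧ n' = n + m := by
  constructor
  · intro h; cases h with
    | cons h1 h2 => exact ⟨_, _, _, _, h1, h2, rfl, rfl⟩
  · rintro ⟨D, n, Γ, m, h1, h2, rfl, rfl⟩; exact .cons h1 h2

theorem many_single {P : Ctx → Ty → ℕ → Prop} {τ Γ n} : Many P [τ] Γ n ↔ P Γ τ n := by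
  constructor
  · intro h; cases h with
    | cons h1 h2 => cases h2; simpa using h1
  · intro h; simpa using Many.cons h Many.nil

theorem many_perm {P : Ctx → Ty → ℕ → Prop} {M M' : List Ty} (h : M.Perm M') :
    ∀ {Γ n}, Many P M Γ n → Many P M' Γ n := by
  induction h with
  | nil => exact fun h => h
  | cons x _ ih => 
    intro Γ n h
    cases h with
    | cons h1 h2 => exact .cons h1 (ih h2)
  | swap x y l =>
    intro Γ n h
    cases h with
    | cons h1 h2 =>
      cases h2 with
      | cons h2 h3 => convert Many.cons h2 (Many.cons h1 h3) using 1 <;> rw [add_left_comm]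
  | trans _ _ ih1 ih2 => exact fun h => ih2 (ih1 h)

theorem many_coe {P : Ctx → Ty → ℕ → Prop} {M M' : List Ty} {Γ n}
    (h : Multiset.ofList M = Multiset.ofList M') (h1 : Many P M Γ n) : Many P M' Γ n :=
  many_perm (Multiset.coe_eq_coe.mp h) h1

theorem many_var {k M Γ n} : Many (fun D τ m => D = Ctx.single k {τ} ∧ m = 1) M Γ n ↔
    Γ = Ctx.single k (Multiset.ofList M) ∧ n = M.length := by
  induction M generalizing Γ n with
  | nil => simp [many_nil_iff]
  | cons τ M ih =>
    rw [many_cons_iff]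
    constructor
    · rintro ⟨D, n, Γ, m, ⟨rfl, rfl⟩, h2, rfl, rfl⟩
      obtain ⟨rfl, rfl⟩ := ih.1 h2
      refine ⟨?_, by simp [add_comm]⟩
      rw [← single_add]; simp
    · rintro ⟨rfl, rfl⟩
      refine ⟨_, _, _, _, ⟨rfl, rfl⟩, ih.2 ⟨rfl, rfl⟩, ?_, by simp [add_comm]⟩
      rw [← single_add]; simp

/-! ### typed substitutions -/

inductive SubT (E : Lm → Ctx → Ty → ℕ → Prop) (σ : ℕ → Lm) : Ctx → Ctx → ℕ → Prop
  | zero : SubT E σ 0 0 0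
  | add {Γ Δ n k D τ m Γ' Δ' n'} : SubT E σ Γ Δ n → E (σ k) D τ m →
      Γ' = Γ + Ctx.single k {τ} → Δ' = Δ + D → n' = n + m → SubT E σ Γ' Δ' n'

section
variable {E : Lm → Ctx → Ty → ℕ → Prop} {σ : ℕ → Lm}

theorem SubT.plus {Γ₁ Δ₁ m₁ Γ₂ Δ₂ m₂} (h1 : SubT E σ Γ₁ Δ₁ m₁) (h2 : SubT E σ Γ₂ Δ₂ m₂) :
    SubT E σ (Γ₁ + Γ₂) (Δ₁ + Δ₂) (m₁ + m₂) := by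
  induction h2 with
  | zero => simpa using h1
  | add _ he hΓ hΔ hn ih =>
    subst hΓ hΔ hn
    exact .add ih he (by rw [add_assoc]) (by rw [add_assoc]) (by rw [add_assoc])

theorem SubT.split {Γ Δ m} (h : SubT E σ Γ Δ m) : ∀ {Γ₁ Γ₂}, Γ = Γ₁ + Γ₂ →
    ∃ Δ₁ Δ₂ m₁ m₂, SubT E σ Γ₁ Δ₁ m₁ ∧ SubT E σ Γ₂ Δ₂ m₂ ∧ Δ = Δ₁ + Δ₂ ∧ m = m₁ + m₂ := by
  induction h with
  | zero =>
    intro Γ₁ Γ₂ h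
    obtain ⟨rfl, rfl⟩ : Γ₁ = 0 ∧ Γ₂ = 0 := by
      constructor <;> funext k <;> have := congrFun h.symm k <;> simp_all
    exact ⟨0, 0, 0, 0, .zero, .zero, by simp, by simp⟩
  | @add Γ Δ n k D τ m Γ' Δ' n' _ he hΓ hΔ hn ih =>
    intro Γ₁ Γ₂ h
    subst hΔ hn hΓ
    have hm : τ ∈ Γ₁ k ∨ τ ∈ Γ₂ k := by
      rw [← Multiset.mem_add, ← Pi.add_apply, ← h]; simp
    rcases hm with hm | hm
    · obtain ⟨Γ₁', rfl⟩ := mem_split hm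
      rw [add_right_comm] at h
      obtain ⟨Δ₁, Δ₂, m₁, m₂, h1, h2, rfl, rfl⟩ := ih (add_right_cancel h)
      exact ⟨Δ₁ + D, Δ₂, m₁ + m, m₂, .add h1 he rfl rfl rfl, h2, by rw [add_right_comm],
        by rw [add_right_comm]⟩
    · obtain ⟨Γ₂', rfl⟩ := mem_split hm
      rw [← add_assoc] at h
      obtain ⟨Δ₁, Δ₂, m₁, m₂, h1, h2, rfl, rfl⟩ := ih (add_right_cancel h)
      exact ⟨Δ₁, Δ₂ + D, m₁, m₂ + m, h1, .add h2 he rfl rfl rfl, by rw [add_assoc],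
        by rw [add_assoc]⟩

theorem SubT.zero_inv {Δ m} (h : SubT E σ 0 Δ m) : Δ = 0 ∧ m = 0 := by
  cases h with
  | zero => simp
  | @add _ _ _ k _ τ _ _ _ _ _ he hΓ hΔ hn =>
    have := congrArg Multiset.card (congrFun hΓ k)
    simp at this

theorem subT_single {k τ Δ m} : SubT E σ (Ctx.single k {τ}) Δ m ↔ E (σ k) Δ τ m := by
  constructor
  · intro h
    generalize hG : Ctx.single k {τ} = G at h
    cases h with
    | zero => have := congrFun hG k; simp at this
    | @add Γ _ _ k' D τ' m' _ _ _ h he hΓ hΔ hn =>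
      subst hΔ hn hG
      have hk : k' = k := by
        by_contra hne
        have := congrArg Multiset.card (congrFun hΓ k')
        simp [Ctx.single, hne] at this
      subst hk
      have h2 : τ' = τ := by
        have := congrFun hΓ k'
        simp only [single_self, Pi.add_apply] at this
        have h3 : τ' ∈ ({τ} : Multiset Ty) := by rw [this]; simp
        simpa using h3
      subst h2
      have : Γ = 0 := by simpa using hΓ
      subst this
      obtain ⟨rfl, rfl⟩ := h.zero_inv
      simpa using he
  · intro h
    exact .add .zero h (by simp) (by simp) (by simp)

/-- transport of `Many` along a substitution -/
theorem many_sub {P Q : Ctx → Ty → ℕ → Prop} {M} 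
    (H : ∀ D τ n', Q D τ n' ↔ ∃ Γ n m, P Γ τ n ∧ SubT E σ Γ D m ∧ n' = n + m) :
    ∀ {Δ n'}, Many Q M Δ n' ↔ ∃ Γ n m, Many P M Γ n ∧ SubT E σ Γ Δ m ∧ n' = n + m := by
  induction M with
  | nil =>
    intro Δ n'
    constructor
    · intro h; cases h; exact ⟨0, 0, 0, .nil, .zero, rfl⟩
    · rintro ⟨Γ, n, m, h1, h2, rfl⟩
      cases h1
      obtain ⟨rfl, rfl⟩ := h2.zero_inv
      exact .nil
  | cons τ M ih =>
    intro Δ n'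
    constructor
    · intro h
      cases h with
      | cons h1 h2 =>
        obtain ⟨Γ, n, m, a, b, rfl⟩ := (H _ _ _).1 h1
        obtain ⟨Γ', n', m', a', b', rfl⟩ := ih.1 h2
        exact ⟨_, _, _, .cons a a', b.plus b', by ring⟩
    · rintro ⟨Γ, n, m, h1, h2, rfl⟩
      cases h1 with
      | cons h1 h3 =>
        obtain ⟨Δ₁, Δ₂, m₁, m₂, a, b, rfl, rfl⟩ := h2.split rfl
        rw [add_add_add_comm]
        exact .cons ((H _ _ _).2 ⟨_, _, _, h1, a, rfl⟩) (ih.2 ⟨_, _, _, h3, b, rfl⟩)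

def LiftOK (E : Lm → Ctx → Ty → ℕ → Prop) (σ : ℕ → Lm) : Prop :=
  ∀ k D τ m, E (rename (· + 1) (σ k)) D τ m ↔ ∃ D0, E (σ k) D0 τ m ∧ D = Ctx.cons 0 D0

def VarOK (E : Lm → Ctx → Ty → ℕ → Prop) : Prop :=
  ∀ k D τ m, E (var k) D τ m ↔ D = Ctx.single k {τ} ∧ m = 0

theorem SubT.shift {σ' : ℕ → Lm} {Γ Δ m} (h : SubT E σ Γ Δ m) (hs : ∀ k, σ' (k+1) = σ k) :
    SubT E σ' (Ctx.cons 0 Γ) Δ m := by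
  induction h with
  | zero => simpa using SubT.zero
  | add _ he hΓ hΔ hn ih =>
    subst hΓ hΔ hn
    refine .add (k := _ + 1) ih (by rw [hs]; exact he) ?_ rfl rfl
    rw [← cons_zero_single, ← cons_add, add_zero]

theorem subT_vars (hE : VarOK E) {j : ℕ} (h : σ 0 = var j) (M : Multiset Ty) :
    SubT E σ (Ctx.cons M 0) (Ctx.single j M) 0 := by
  induction M using Multiset.induction with
  | empty => simpa using SubT.zero
  | cons a s ih =>
    refine .add (k := 0) ih (by rw [h]; exact (hE _ _ a _).2 ⟨rfl, rfl⟩) ?_ ?_ rfl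
    · rw [cons_eq_single, cons_eq_single, ← single_add, add_comm, Multiset.singleton_add]
    · rw [← single_add, add_comm, Multiset.singleton_add]

theorem SubT.lift (hE : VarOK E) (hL : LiftOK E σ) {Γ Δ m} (M : Multiset Ty)
    (h : SubT E σ Γ Δ m) :
    SubT E (liftS σ) (Ctx.cons M Γ) (Ctx.cons M Δ) m := by
  rw [cons_split M Γ, cons_split M Δ, ← zero_add m]
  refine SubT.plus ?_ ?_
  · rw [cons_eq_single M]
    have := subT_vars hE (σ := liftS σ) (j := 0) rfl M
    rwa [cons_eq_single M] at this
  · induction h with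
    | zero => simpa using SubT.zero
    | @add Γ Δ n k D τ m Γ' Δ' n' _ he hΓ hΔ hn ih =>
      subst hΓ hΔ hn
      refine .add (k := k + 1) ih ((hL k (Ctx.cons 0 D) τ m).2 ⟨D, he, rfl⟩) ?_ ?_ rfl
      · rw [← cons_zero_single, ← cons_add, add_zero]
      · rw [← cons_add, add_zero]

theorem SubT.unlift (hE : VarOK E) (hL : LiftOK E σ) {Γ Δ m} (h : SubT E (liftS σ) Γ Δ m) :
    Γ 0 = Δ 0 ∧ SubT E σ (Ctx.tail Γ) (Ctx.tail Δ) m := by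
  induction h with
  | zero => exact ⟨rfl, .zero⟩
  | @add Γ Δ n k D τ m Γ' Δ' n' _ he hΓ hΔ hn ih =>
    subst hΓ hΔ hn
    cases k with
    | zero =>
      obtain ⟨rfl, rfl⟩ := (hE _ _ _ _).1 he
      exact ⟨by simp [ih.1], by simpa using ih.2⟩
    | succ k =>
      obtain ⟨D0, h1, rfl⟩ := (hL k D τ m).1 he
      exact ⟨by simp [ih.1], .add ih.2 h1 (by simp) (by simp) rfl⟩

theorem subT_lift_iff (hE : VarOK E) (hL : LiftOK E σ) {Γ Δ m} :
    SubT E (liftS σ) Γ Δ m ↔ Γ 0 = Δ 0 ∧ SubT E σ (Ctx.tail Γ) (Ctx.tail Δ) m := by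
  constructor
  · exact fun h => h.unlift hE hL
  · rintro ⟨h1, h2⟩
    have := h2.lift hE hL (Γ 0)
    rwa [cons_tail, h1, cons_tail] at this

theorem SubT.var_map (hE : VarOK E) {f : ℕ → ℕ} (F : Ctx → Ctx) (h0 : F 0 = 0)
    (hadd : ∀ a b, F (a + b) = F a + F b) (hs : ∀ k τ, F (Ctx.single k {τ}) = Ctx.single (f k) {τ})
    (hσ : ∀ k, σ k = var (f k)) {Γ Δ m} (h : SubT E σ Γ Δ m) : Δ = F Γ ∧ m = 0 := by
  induction h with
  | zero => exact ⟨h0.symm, rfl⟩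
  | add _ he hΓ hΔ hn ih =>
    subst hΓ hΔ hn
    rw [hσ] at he
    obtain ⟨rfl, rfl⟩ := (hE _ _ _ _).1 he
    rw [hadd, hs, ih.1, ih.2]; simp

theorem subT_var_map (hE : VarOK E) {f : ℕ → ℕ} (F : Ctx → Ctx) (h0 : F 0 = 0)
    (hadd : ∀ a b, F (a + b) = F a + F b) (hs : ∀ k τ, F (Ctx.single k {τ}) = Ctx.single (f k) {τ})
    (hσ : ∀ k, σ k = var (f k)) {Γ Δ m} (h : SubT E var Γ Δ m) : SubT E σ Γ (F Γ) 0 := by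
  induction h with
  | zero => rw [h0]; exact .zero
  | add _ he hΓ hΔ hn ih =>
    subst hΓ hΔ hn
    refine .add ih ((by rw [hσ]; exact (hE _ _ _ _).2 ⟨rfl, rfl⟩ )) rfl ?_ rfl
    rw [hadd, hs]

/-- substitution of one term for the variable `0`: forward -/
theorem subT_zero_fwd {P : Ctx → Ty → ℕ → Prop} {u : Lm} (h0 : σ 0 = u)
    (hP : ∀ D τ n, P D τ n → ∃ m, n = m + 1 ∧ E u D τ m) {M Δ n} (h : Many P M Δ n) :
    ∃ m ≤ n, SubT E σ (Ctx.cons (Multiset.ofList M) 0) Δ m := by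
  induction h with
  | nil => exact ⟨0, le_rfl, by simpa using SubT.zero⟩
  | @cons D τ n M Γ k h _ ih =>
    obtain ⟨m, hm, h1⟩ := ih
    obtain ⟨m', rfl, h2⟩ := hP _ _ _ h
    refine ⟨m + m', by omega, .add (k := 0) h1 (by rw [h0]; exact h2) ?_ (add_comm _ _) rfl⟩
    rw [cons_eq_single, cons_eq_single, ← single_add, add_comm, Multiset.singleton_add]; rfl

/-- substitution of one term for the variable `0`: backward -/
theorem subT_zero_bwd (hE : VarOK E) {P : Ctx → Ty → ℕ → Prop} {u : Lm} (h0 : σ 0 = u)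
    (h1 : ∀ k, σ (k+1) = var k)
    (hP : ∀ D τ m, E u D τ m → P D τ (m + 1)) {Γ Δ n} (h : SubT E σ Γ Δ n) :
    ∃ M Θ m, Many P M Θ m ∧ Multiset.ofList M = Γ 0 ∧ Δ = Ctx.tail Γ + Θ := by
  induction h with
  | zero => exact ⟨[], 0, 0, .nil, rfl, by simp⟩
  | @add Γ Δ n k D τ m Γ' Δ' n' _ he hΓ hΔ hn ih =>
    subst hΓ hΔ hn
    obtain ⟨M, Θ, q, a, b, rfl⟩ := ih
    cases k with
    | zero =>
      rw [h0] at he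
      refine ⟨τ :: M, _, _, .cons (hP _ _ _ he) a, ?_, ?_⟩
      · simp [← b]
        rw [add_comm, Multiset.singleton_add]; rfl
      · simp only [tail_add, tail_single_zero, add_zero]
        rw [add_assoc, add_comm Θ]
    | succ k =>
      rw [h1] at he
      obtain ⟨rfl, rfl⟩ := (hE _ _ _ _).1 he
      exact ⟨M, Θ, q, a, by simp [b], by simp [add_right_comm]⟩

end

/-! ### syntax -/

theorem liftS_var : liftS var = var := by
  funext k; cases k <;> rfl

theorem subst_var (t : Lm) : subst var t = t := by
  induction t <;> simp_all [subst, liftS_var]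

theorem liftS_var_comp (f : ℕ → ℕ) : liftS (fun k => var (f k)) = fun k => var (liftR f k) := by
  funext k; cases k <;> rfl

theorem rename_eq_subst (f : ℕ → ℕ) (t : Lm) : rename f t = subst (fun k => var (f k)) t := by
  induction t generalizing f <;> simp_all [subst, rename, liftS_var_comp]

theorem subst_rename (σ : ℕ → Lm) (f : ℕ → ℕ) (t : Lm) :
    subst σ (rename f t) = subst (fun k => σ (f k)) t := by
  have key : ∀ (σ : ℕ → Lm) (f : ℕ → ℕ),
      (fun k => liftS σ (liftR f k)) = liftS (fun k => σ (f k)) := by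
    intro σ f; funext k; cases k <;> rfl
  induction t generalizing f σ <;> simp_all [subst, rename]

theorem rename_rename (f g : ℕ → ℕ) (t : Lm) :
    rename f (rename g t) = rename (fun k => f (g k)) t := by
  rw [rename_eq_subst f, subst_rename, rename_eq_subst]

theorem rename_id (t : Lm) : rename (fun k => k) t = t := by
  rw [rename_eq_subst]; exact subst_var t

theorem substIn_succ (n : ℕ) (v t : Lm) :
    substIn (n + 1) v t = substIn n v (rename (liftR (· + 1)) t) := by
  unfold substIn
  rw [subst_rename]
  congr 1
  funext k
  cases k with
  | zero => rfl
  | succ k => simp only [liftR]; congr 1; omega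

theorem isVal_rename {v : Lm} (f) (h : IsVal v) : IsVal (rename f v) := by
  cases v <;> simp_all [IsVal, rename]

/-! ### common part of the two systems -/

structure Sys where
  D : Ctx → Lm → Ty → ℕ → Prop
  A : Lm → List Ty → Ctx → ℕ → Prop
  ar : List Ty → Ty → Ty
  app_iff : ∀ {t u Γ' τ n'}, D Γ' (app t u) τ n' ↔ ∃ Γ n M Δ m, D Γ t (ar M τ) n ∧
    A u M Δ m ∧ Γ' = Γ + Δ ∧ n' = n + m + 1
  es_iff : ∀ {t u Γ' τ n'}, D Γ' (esub t u) τ n' ↔ ∃ Γ n M Δ m, D Γ t τ n ∧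
    A u M Δ m ∧ Multiset.ofList M = Γ 0 ∧ Γ' = Ctx.tail Γ + Δ ∧ n' = n + m + 1
  lam_iff : ∀ {t Γ' M τ n'}, D Γ' (lam t) (ar M τ) n' ↔ ∃ Γ n, D Γ t τ n ∧
    Multiset.ofList M = Γ 0 ∧ Γ' = Ctx.tail Γ ∧ n' = n + 1
  renA : ∀ {u M Δ m}, A (rename (· + 1) u) M Δ m ↔ ∃ Δ0, A u M Δ0 m ∧ Δ = Ctx.cons 0 Δ0

namespace Sys
variable (S : Sys)

def Red (a b : Lm) : Prop :=
  (∀ Γ τ n, S.D Γ a τ n → ∃ n' < n, S.D Γ b τ n') ∧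
  (∀ Γ τ n, S.D Γ b τ n → ∃ n', S.D Γ a τ n')

variable {S}

theorem Red.of_iso {a a' b : Lm} (h : S.Red a' b)
    (hi : ∀ Γ τ n, S.D Γ a τ n ↔ S.D Γ a' τ n) : S.Red a b := by
  simpa only [Red, hi] using h

theorem Red.esubL {a b : Lm} (h : S.Red a b) (u : Lm) : S.Red (esub a u) (esub b u) := by
  constructor
  · intro Γ τ n h1
    rename' h1 => hh1
    obtain ⟨Γ, n, M, Δ, m, h1, h2, h3, rfl, rfl⟩ := S.es_iff.1 hh1
    obtain ⟨n', hn, h4⟩ := h.1 _ _ _ h1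
    exact ⟨_, by omega, S.es_iff.2 ⟨Γ, n', M, Δ, m, h4, h2, h3, rfl, rfl⟩⟩
  · intro Γ τ n h1
    rename' h1 => hh1
    obtain ⟨Γ, n, M, Δ, m, h1, h2, h3, rfl, rfl⟩ := S.es_iff.1 hh1
    obtain ⟨n', h4⟩ := h.2 _ _ _ h1
    exact ⟨_, S.es_iff.2 ⟨Γ, n', M, Δ, m, h4, h2, h3, rfl, rfl⟩⟩

theorem Red.appL {a b : Lm} (h : S.Red a b) (u : Lm) : S.Red (app a u) (app b u) := by
  constructor
  · intro Γ τ n h1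
    rename' h1 => hh1
    obtain ⟨Γ, n, M, Δ, m, h1, h2, rfl, rfl⟩ := S.app_iff.1 hh1
    obtain ⟨n', hn, h4⟩ := h.1 _ _ _ h1
    exact ⟨_, by omega, S.app_iff.2 ⟨Γ, n', M, Δ, m, h4, h2, rfl, rfl⟩⟩
  · intro Γ τ n h1
    rename' h1 => hh1
    obtain ⟨Γ, n, M, Δ, m, h1, h2, rfl, rfl⟩ := S.app_iff.1 hh1
    obtain ⟨n', h4⟩ := h.2 _ _ _ h1
    exact ⟨_, S.app_iff.2 ⟨Γ, n', M, Δ, m, h4, h2, rfl, rfl⟩⟩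

theorem app_esub (s e u : Lm) (Γ τ n) :
    S.D Γ (app (esub s e) u) τ n ↔ S.D Γ (esub (app s (rename (· + 1) u)) e) τ n := by
  constructor
  · intro h
    obtain ⟨Γ, n, M, Δ, m, h1, h2, rfl, rfl⟩ := S.app_iff.1 h
    rename' h1 => hh1
    obtain ⟨Γ, n, M', Δ', m', h1, h3, h4, rfl, rfl⟩ := S.es_iff.1 hh1
    refine S.es_iff.2 ⟨_, _, _, _, _, S.app_iff.2 ⟨_, _, _, _, _, h1, 
      S.renA.2 ⟨_, h2, rfl⟩, rfl, rfl⟩, h3, ?_, ?_, ?_⟩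
    · simp [h4]
    · simp [add_right_comm]
    · ring
  · intro h
    obtain ⟨Γ, n, M, Δ, m, h1, h2, h3, rfl, rfl⟩ := S.es_iff.1 h
    rename' h1 => hh1
    obtain ⟨Γ, n, M', Δ', m', h1, h4, rfl, rfl⟩ := S.app_iff.1 hh1
    rename' h4 => hh4
    obtain ⟨Δ0, h4, rfl⟩ := S.renA.1 hh4
    refine S.app_iff.2 ⟨_, _, _, _, _, S.es_iff.2 ⟨_, _, _, _, _, h1, h2, ?_, rfl, rfl⟩,
      h4, ?_, ?_⟩
    · simpa using h3
    · simp [add_right_comm]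
    · ring

theorem red_dB (L : List Lm) : ∀ (t u : Lm), S.Red (app (plug L (lam t)) u)
    (plug L (esub t (rename (· + L.length) u))) := by
  induction L with
  | nil =>
    intro t u
    have : rename (· + ([] : List Lm).length) u = u := rename_id u
    rw [this]
    constructor
    · intro Γ τ n h
      obtain ⟨Γ, n, M, Δ, m, h1, h2, rfl, rfl⟩ := S.app_iff.1 h
      rename' h1 => hh1
      obtain ⟨Γ, n, h1, h3, rfl, rfl⟩ := S.lam_iff.1 hh1
      exact ⟨n + m + 1, by omega, S.es_iff.2 ⟨_, _, _, _, _, h1, h2, h3, rfl, rfl⟩⟩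
    · intro Γ τ n h
      obtain ⟨Γ, n, M, Δ, m, h1, h2, h3, rfl, rfl⟩ := S.es_iff.1 h
      exact ⟨_, S.app_iff.2 ⟨_, _, _, _, _, S.lam_iff.2 ⟨_, _, h1, h3, rfl, rfl⟩, h2, rfl, rfl⟩⟩
  | cons e L ih =>
    intro t u
    have h := (ih t (rename (· + 1) u)).esubL e
    rw [rename_rename] at h
    have : (fun k => k + 1 + L.length) = (· + (e :: L).length) := by
      funext k; simp only [List.length_cons]; omega
    rw [this] at h
    exact h.of_iso (app_esub _ _ _)

/-- quantitative consequences -/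
theorem norm_of_typed {Step : Lm → Lm → Prop} (hs : ∀ a b, Step a b → S.Red a b) :
    ∀ n Γ t τ, S.D Γ t τ n →
      ∃ p, Relation.ReflTransGen Step t p ∧ ∀ u, ¬ Step p u := by
  intro n
  induction n using Nat.strong_induction_on with
  | _ n ih =>
    intro Γ t τ h
    by_cases hn : ∀ u, ¬ Step t u
    · exact ⟨t, .refl, hn⟩
    · push Not at hn
      obtain ⟨u, hu⟩ := hn
      rename' h => hh
      obtain ⟨n', hlt, h'⟩ := (hs _ _ hu).1 _ _ _ hh
      obtain ⟨p, hp, hp'⟩ := ih n' hlt _ _ _ h'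
      exact ⟨p, .head hu hp, hp'⟩

theorem typed_of_red {Step : Lm → Lm → Prop} (hs : ∀ a b, Step a b → S.Red a b) {t p}
    (h : Relation.ReflTransGen Step t p) (hp : ∃ Γ τ n, S.D Γ p τ n) :
    ∃ Γ τ n, S.D Γ t τ n := by
  induction h using Relation.ReflTransGen.head_induction_on with
  | refl => exact hp
  | head h _ ih =>
    obtain ⟨Γ, τ, n, h1⟩ := ih
    obtain ⟨n', h2⟩ := (hs _ _ h).2 _ _ _ h1
    exact ⟨_, _, _, h2⟩

end Sys

/-! ### renaming operators on contexts -/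

def GV (σ : ℕ → Lm) : Prop := ∀ k, ∃ j, σ k = var j

theorem GV.lift {σ} (h : GV σ) : GV (liftS σ) := by
  intro k
  cases k with
  | zero => exact ⟨0, rfl⟩
  | succ k => obtain ⟨j, hj⟩ := h k; exact ⟨j + 1, by simp [liftS, hj, rename]⟩

theorem GV.ok {E} (hE : VarOK E) {σ} (h : GV σ) : LiftOK E σ := by
  intro k D τ m
  obtain ⟨j, hj⟩ := h k
  rw [hj]
  change E (var (j + 1)) D τ m ↔ _
  rw [hE]
  have hE' := hE j
  simp only [hE']
  constructor
  · rintro ⟨rfl, rfl⟩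
    exact ⟨_, ⟨rfl, rfl⟩, (cons_zero_single _ _).symm⟩
  · rintro ⟨_, ⟨rfl, rfl⟩, rfl⟩
    exact ⟨cons_zero_single _ _, rfl⟩

def sh (Γ : Ctx) : Ctx := Ctx.cons 0 Γ
def sh1 (Γ : Ctx) : Ctx := Ctx.cons (Γ 0) (Ctx.cons 0 (Ctx.tail Γ))

structure IsRen (f : ℕ → ℕ) (F : Ctx → Ctx) : Prop where
  h0 : F 0 = 0
  hadd : ∀ a b, F (a + b) = F a + F b
  hs : ∀ k τ, F (Ctx.single k {τ}) = Ctx.single (f k) {τ}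

theorem isRen_id : IsRen (fun k => k) (fun Γ => Γ) := ⟨rfl, fun _ _ => rfl, fun _ _ => rfl⟩
theorem isRen_sh : IsRen (· + 1) sh :=
  ⟨cons_zero_zero, fun a b => by simp [sh, ← cons_add], fun k τ => cons_zero_single _ _⟩
theorem isRen_sh1 : IsRen (liftR (· + 1)) sh1 := by
  refine ⟨by simp [sh1], fun a b => by simp [sh1, ← cons_add], fun k τ => ?_⟩
  cases k with
  | zero => simp [sh1, liftR, cons_eq_single]
  | succ k => simp [sh1, liftR, cons_zero_single]

/-- renaming lemma, from the substitution lemma for substitutions by variables -/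
theorem rename_gen {E} (hE : VarOK E) {D : Ctx → Lm → Ty → ℕ → Prop}
    (H : ∀ t σ, GV σ → ∀ Δ τ n', D Δ (subst σ t) τ n' ↔
      ∃ Γ n m, D Γ t τ n ∧ SubT E σ Γ Δ m ∧ n' = n + m) {f F} (hF : IsRen f F) (t Δ τ n) :
    D Δ (rename f t) τ n ↔ ∃ Γ, D Γ t τ n ∧ Δ = F Γ := by
  rw [rename_eq_subst, H _ _ (fun k => ⟨_, rfl⟩)]
  constructor
  · rintro ⟨Γ, n, m, h1, h2, rfl⟩
    obtain ⟨rfl, rfl⟩ := h2.var_map hE F hF.h0 hF.hadd hF.hs (fun _ => rfl)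
    exact ⟨_, h1, rfl⟩
  · rintro ⟨Γ, h1, rfl⟩
    refine ⟨Γ, n, 0, h1, ?_, rfl⟩
    have h2 := h1
    rw [← subst_var t, H _ _ (fun k => ⟨_, rfl⟩)] at h2
    rename' h2 => hh2
    obtain ⟨Γ', n, m, _, h2, _⟩ := hh2
    obtain ⟨rfl, rfl⟩ := h2.var_map hE (f := fun k => k) (fun Γ => Γ) isRen_id.h0
      isRen_id.hadd isRen_id.hs (fun _ => rfl)
    exact subT_var_map hE F hF.h0 hF.hadd hF.hs (fun _ => rfl) h2

/-- contexts of derivations are finite -/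
theorem fin_gen {E} (hE : VarOK E) {D : Ctx → Lm → Ty → ℕ → Prop}
    (H : ∀ t σ, GV σ → ∀ Δ τ n', D Δ (subst σ t) τ n' ↔
      ∃ Γ n m, D Γ t τ n ∧ SubT E σ Γ Δ m ∧ n' = n + m) {t Γ τ n} (h : D Γ t τ n) :
    SubT E var (Ctx.tail Γ) (Ctx.tail Γ) 0 := by
  rw [← subst_var t, H _ _ (fun k => ⟨_, rfl⟩)] at h
  obtain ⟨Γ', n, m, _, h2, _⟩ := h
  obtain ⟨rfl, rfl⟩ := h2.var_map hE (f := fun k => k) (fun Γ => Γ) isRen_id.h0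
      isRen_id.hadd isRen_id.hs (fun _ => rfl)
  rw [← liftS_var] at h2
  exact (h2.unlift hE (GV.ok hE (fun k => ⟨k, rfl⟩))).2

/-! ### system N -/

theorem derN_var {k Γ τ n} : DerN Γ (var k) τ n ↔ Γ = Ctx.single k {τ} ∧ n = 1 := by
  constructor
  · intro h; cases h; exact ⟨rfl, rfl⟩
  · rintro ⟨rfl, rfl⟩; exact .ax _ _

theorem derN_lam {t Γ' τ' n'} : DerN Γ' (lam t) τ' n' ↔ ∃ Γ n M τ, DerN Γ t τ n ∧
    Multiset.ofList M = Γ 0 ∧ Γ' = Ctx.tail Γ ∧ τ' = Ty.arr M τ ∧ n' = n + 1 := by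
  constructor
  · intro h; cases h with
    | abs M h h2 => exact ⟨_, _, _, _, h, h2, rfl, rfl, rfl⟩
  · rintro ⟨Γ, n, M, τ, h, h2, rfl, rfl, rfl⟩; exact .abs M h h2

abbrev AN (u : Lm) : List Ty → Ctx → ℕ → Prop := Many (fun D τ m => DerN D u τ m)

theorem derN_app {t u Γ' τ n'} : DerN Γ' (app t u) τ n' ↔ ∃ Γ n M Δ m, 
    DerN Γ t (Ty.arr M τ) n ∧ AN u M Δ m ∧ Γ' = Γ + Δ ∧ n' = n + m + 1 := by
  constructor
  · intro h; cases h with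
    | app prs h h2 => exact ⟨_, _, _, _, _, h, many_iff.2 ⟨prs, h2, rfl, rfl, rfl⟩, rfl, rfl⟩
  · rintro ⟨Γ, n, M, Δ, m, h, h2, rfl, rfl⟩
    rename' h2 => hh2
    obtain ⟨prs, h2, rfl, rfl, rfl⟩ := many_iff.1 hh2
    exact .app prs h h2

theorem derN_es {t u Γ' τ n'} : DerN Γ' (esub t u) τ n' ↔ ∃ Γ n M Δ m, DerN Γ t τ n ∧
    AN u M Δ m ∧ Multiset.ofList M = Γ 0 ∧ Γ' = Ctx.tail Γ + Δ ∧ n' = n + m + 1 := by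
  constructor
  · intro h; cases h with
    | es prs h h1 h2 =>
      exact ⟨_, _, _, _, _, h, many_iff.2 ⟨prs, h2, rfl, rfl, rfl⟩, h1, rfl, rfl⟩
  · rintro ⟨Γ, n, M, Δ, m, h, h2, h1, rfl, rfl⟩
    rename' h2 => hh2
    obtain ⟨prs, h2, rfl, rfl, rfl⟩ := many_iff.1 hh2
    exact .es prs h h1 h2

theorem derN_pos {Γ t τ n} (h : DerN Γ t τ n) : ∃ m, n = m + 1 := by
  cases h <;> exact ⟨_, rfl⟩

def EN (u : Lm) (D : Ctx) (τ : Ty) (m : ℕ) : Prop := DerN D u τ (m + 1)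

theorem varOK_N : VarOK EN := by
  intro k D τ m
  simp [EN, derN_var]

theorem substN {G : (ℕ → Lm) → Prop} (hG : ∀ σ, G σ → LiftOK EN σ ∧ G (liftS σ)) (t : Lm) :
    ∀ σ, G σ → ∀ Δ τ n', DerN Δ (subst σ t) τ n' ↔
      ∃ Γ n m, DerN Γ t τ n ∧ SubT EN σ Γ Δ m ∧ n' = n + m := by
  induction t with
  | var k =>
    intro σ _ Δ τ n'
    constructor
    · intro h
      obtain ⟨m, rfl⟩ := derN_pos h
      exact ⟨_, 1, m, derN_var.2 ⟨rfl, rfl⟩, subT_single.2 h, by ring⟩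
    · rintro ⟨Γ, n, m, h1, h2, rfl⟩
      obtain ⟨rfl, rfl⟩ := derN_var.1 h1
      rw [add_comm]
      exact subT_single.1 h2
  | lam t ih =>
    intro σ hσ Δ τ n'
    obtain ⟨hL, hσ'⟩ := hG σ hσ
    simp only [subst]
    constructor
    · intro h
      obtain ⟨Γ', n', M, τ, h1, h2, rfl, rfl, rfl⟩ := derN_lam.1 h
      rename' h1 => hh1
      obtain ⟨Γ, n, m, h1, h3, rfl⟩ := (ih _ hσ' _ _ _).1 hh1
      obtain ⟨h4, h5⟩ := h3.unlift varOK_N hL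
      exact ⟨_, _, m, derN_lam.2 ⟨_, _, M, _, h1, by rw [h4, h2], rfl, rfl, rfl⟩, h5, by ring⟩
    · rintro ⟨Γ, n, m, h1, h2, rfl⟩
      rename' h1 => hh1
      obtain ⟨Γ, n, M, τ, h1, h3, rfl, rfl, rfl⟩ := derN_lam.1 hh1
      have h4 := h2.lift varOK_N hL (Γ 0)
      rw [cons_tail] at h4
      exact derN_lam.2 ⟨_, _, M, _, (ih _ hσ' _ _ _).2 ⟨_, _, _, h1, h4, rfl⟩, h3, rfl, rfl,
        by ring⟩
  | app t u iht ihu =>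
    intro σ hσ Δ τ n'
    have hA := fun M Δ n' => many_sub (M := M) (Δ := Δ) (n' := n') (ihu σ hσ)
    simp only [subst]
    constructor
    · intro h
      obtain ⟨Γ, n, M, Δ, m, h1, h2, rfl, rfl⟩ := derN_app.1 h
      rename' h1 => hh1
      obtain ⟨Γ1, n1, m1, h1, h3, rfl⟩ := (iht σ hσ _ _ _).1 hh1
      rename' h2 => hh2
      obtain ⟨Γ2, n2, m2, h2, h4, rfl⟩ := (hA _ _ _).1 hh2
      exact ⟨_, _, _, derN_app.2 ⟨_, _, _, _, _, h1, h2, rfl, rfl⟩, h3.plus h4, by ring⟩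
    · rintro ⟨Γ, n, m, h1, h2, rfl⟩
      rename' h1 => hh1
      obtain ⟨Γ, n, M, Δ, m, h1, h3, rfl, rfl⟩ := derN_app.1 hh1
      obtain ⟨Δ₁, Δ₂, m₁, m₂, a, b, rfl, rfl⟩ := h2.split rfl
      exact derN_app.2 ⟨_, _, _, _, _, (iht σ hσ _ _ _).2 ⟨_, _, _, h1, a, rfl⟩,
        (hA _ _ _).2 ⟨_, _, _, h3, b, rfl⟩, rfl, by ring⟩
  | esub t u iht ihu =>
    intro σ hσ Δ τ n'
    have hA := fun M Δ n' => many_sub (M := M) (Δ := Δ) (n' := n') (ihu σ hσ)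
    obtain ⟨hL, hσ'⟩ := hG σ hσ
    simp only [subst]
    constructor
    · intro h
      obtain ⟨Γ, n, M, Δ, m, h1, h2, h5, rfl, rfl⟩ := derN_es.1 h
      rename' h1 => hh1
      obtain ⟨Γ1, n1, m1, h1, h3, rfl⟩ := (iht _ hσ' _ _ _).1 hh1
      rename' h2 => hh2
      obtain ⟨Γ2, n2, m2, h2, h4, rfl⟩ := (hA _ _ _).1 hh2
      obtain ⟨h6, h7⟩ := h3.unlift varOK_N hL
      exact ⟨_, _, _, derN_es.2 ⟨_, _, _, _, _, h1, h2, by rw [h6, h5], rfl, rfl⟩,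
        h7.plus h4, by ring⟩
    · rintro ⟨Γ, n, m, h1, h2, rfl⟩
      rename' h1 => hh1
      obtain ⟨Γ, n, M, Δ, m, h1, h3, h5, rfl, rfl⟩ := derN_es.1 hh1
      obtain ⟨Δ₁, Δ₂, m₁, m₂, a, b, rfl, rfl⟩ := h2.split rfl
      have h4 := a.lift varOK_N hL (Γ 0)
      rw [cons_tail] at h4
      exact derN_es.2 ⟨_, _, _, _, _, (iht _ hσ' _ _ _).2 ⟨_, _, _, h1, h4, rfl⟩,
        (hA _ _ _).2 ⟨_, _, _, h3, b, rfl⟩, h5, rfl, by ring⟩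

theorem substN_var (t : Lm) : ∀ σ, GV σ → ∀ Δ τ n', DerN Δ (subst σ t) τ n' ↔
    ∃ Γ n m, DerN Γ t τ n ∧ SubT EN σ Γ Δ m ∧ n' = n + m :=
  substN (G := GV) (fun _ h => ⟨h.ok varOK_N, h.lift⟩) t

theorem renameN {f F} (hF : IsRen f F) (t Δ τ n) :
    DerN Δ (rename f t) τ n ↔ ∃ Γ, DerN Γ t τ n ∧ Δ = F Γ :=
  rename_gen varOK_N substN_var hF t Δ τ n

theorem substN_all (t : Lm) : ∀ σ, True → ∀ Δ τ n', DerN Δ (subst σ t) τ n' ↔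
    ∃ Γ n m, DerN Γ t τ n ∧ SubT EN σ Γ Δ m ∧ n' = n + m :=
  substN (G := fun _ => True)
  (fun σ _ => ⟨fun k D τ m => renameN isRen_sh (σ k) D τ (m + 1), trivial⟩) t

theorem many_ren {P Q : Ctx → Ty → ℕ → Prop} {M} {F : Ctx → Ctx} (h0 : F 0 = 0)
    (hadd : ∀ a b, F (a + b) = F a + F b)
    (H : ∀ D τ n', Q D τ n' ↔ ∃ Γ, P Γ τ n' ∧ D = F Γ) :
    ∀ {Δ n'}, Many Q M Δ n' ↔ ∃ Γ, Many P M Γ n' ∧ Δ = F Γ := by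
  induction M with
  | nil => intro Δ n'; simp only [many_nil_iff]; constructor
           · rintro ⟨rfl, rfl⟩; exact ⟨0, ⟨rfl, rfl⟩, h0.symm⟩
           · rintro ⟨_, ⟨rfl, rfl⟩, rfl⟩; exact ⟨h0, rfl⟩
  | cons τ M ih =>
    intro Δ n'
    simp only [many_cons_iff]
    constructor
    · rintro ⟨D, n, Γ, m, h1, h2, rfl, rfl⟩
      rename' h1 => hh1
      obtain ⟨D, h1, rfl⟩ := (H _ _ _).1 hh1
      rename' h2 => hh2
      obtain ⟨Γ, h2, rfl⟩ := ih.1 hh2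
      exact ⟨_, ⟨_, _, _, _, h1, h2, rfl, rfl⟩, (hadd _ _).symm⟩
    · rintro ⟨_, ⟨D, n, Γ, m, h1, h2, rfl, rfl⟩, rfl⟩
      exact ⟨_, _, _, _, (H _ _ _).2 ⟨_, h1, rfl⟩, ih.2 ⟨_, h2, rfl⟩, hadd _ _, rfl⟩

def SN : Sys where
  D := DerN
  A := AN
  ar := Ty.arr
  app_iff := derN_app
  es_iff := derN_es
  lam_iff := by
    intro t Γ' M τ n'
    rw [derN_lam]
    constructor
    · rintro ⟨Γ, n, M', τ', h1, h2, rfl, h3, rfl⟩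
      cases h3
      exact ⟨_, _, h1, h2, rfl, rfl⟩
    · rintro ⟨Γ, n, h1, h2, rfl, rfl⟩
      exact ⟨_, _, _, _, h1, h2, rfl, rfl, rfl⟩
  renA := many_ren isRen_sh.h0 isRen_sh.hadd (renameN isRen_sh _)

theorem redN_s (t u : Lm) : SN.Red (esub t u) (subst0 u t) := by
  constructor
  · intro Γ τ n h
    obtain ⟨Γ, n, M, Δ, m, h1, h2, h3, rfl, rfl⟩ := derN_es.1 h
    obtain ⟨m', hm, h4⟩ := subT_zero_fwd (E := EN) (u := u)
      (σ := fun k => match k with | 0 => u | k + 1 => var (k + 0)) rfl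
      (fun D τ n h => by obtain ⟨m, rfl⟩ := derN_pos h; exact ⟨m, rfl, h⟩) h2
    have h5 := (fin_gen varOK_N substN_var h1).shift
      (σ' := fun k => match k with | 0 => u | k + 1 => var (k + 0)) (fun _ => rfl)
    have h6 := h4.plus h5
    rw [← cons_split, h3, cons_tail, add_comm Δ] at h6
    exact ⟨n + (m' + 0), by omega, (substN_all t _ trivial _ _ _).2 ⟨_, _, _, h1, h6, rfl⟩⟩
  · intro Γ τ n h
    obtain ⟨Γ, n, m, h1, h2, rfl⟩ := (substN_all t _ trivial _ _ _).1 h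
    obtain ⟨M, Θ, q, h3, h4, rfl⟩ := subT_zero_bwd varOK_N (u := u) 
      (P := fun D τ m => DerN D u τ m) rfl (fun _ => rfl) (fun _ _ _ h => h) h2
    exact ⟨_, derN_es.2 ⟨_, _, _, _, _, h1, h3, h4, rfl, rfl⟩⟩

theorem redN {r a b} (h : StepN r a b) : SN.Red a b := by
  induction h with
  | dB L t u => exact Sys.red_dB L t u
  | s t u => exact redN_s t u
  | appL u _ ih => exact ih.appL u
  | esubL u _ ih => exact ih.esubL u
  | lam _ ih =>
    constructor
    · intro Γ τ n h1
      rename' h1 => hh1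
      obtain ⟨Γ, n, M, τ, h1, h2, rfl, rfl, rfl⟩ := derN_lam.1 hh1
      obtain ⟨n', hn, h4⟩ := ih.1 _ _ _ h1
      exact ⟨_, by omega, derN_lam.2 ⟨Γ, n', M, τ, h4, h2, rfl, rfl, rfl⟩⟩
    · intro Γ τ n h1
      rename' h1 => hh1
      obtain ⟨Γ, n, M, τ, h1, h2, rfl, rfl, rfl⟩ := derN_lam.1 hh1
      obtain ⟨n', h4⟩ := ih.2 _ _ _ h1
      exact ⟨_, derN_lam.2 ⟨Γ, n', M, τ, h4, h2, rfl, rfl, rfl⟩⟩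

theorem nsize_le {t Γ τ n} (h : DerN Γ t τ n) : nsize t ≤ n := by
  induction h <;> simp only [nsize] <;> omega

theorem boundN {t q p} (h : RedCntN t q p) : ∀ {Γ τ n}, DerN Γ t τ n →
    q.1 + q.2 + nsize p ≤ n := by
  induction h with
  | refl t => intro Γ τ n h; simpa using nsize_le h
  | db hs _ ih =>
    intro Γ τ n h
    rename' h => hh
    obtain ⟨n', hn, h'⟩ := (redN hs).1 _ _ _ hh
    have := ih h'
    simp only at this ⊢
    omega
  | s hs _ ih =>
    intro Γ τ n h
    rename' h => hh
    obtain ⟨n', hn, h'⟩ := (redN hs).1 _ _ _ hh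
    have := ih h'
    simp only at this ⊢
    omega

/-- normal forms for N -/
theorem nfN (t : Lm) (h : ∀ u r, ¬ StepN r t u) : NeN t ∨ ∃ s, t = lam s ∧ NoN s := by
  induction t with
  | var k => exact .inl (.var k)
  | esub t u => exact absurd (StepN.s t u) (h _ _)
  | lam t ih =>
    right
    refine ⟨t, rfl, ?_⟩
    rcases ih (fun u r hs => h _ _ (.lam hs)) with h1 | ⟨s, rfl, h1⟩
    · exact .ne h1
    · exact .lam h1
  | app t u ih _ =>
    left
    rcases ih (fun u r hs => h _ _ (.appL _ hs)) with h1 | ⟨s, rfl, h1⟩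
    · exact .app _ h1
    · exact absurd (StepN.dB [] s u) (h _ _)

theorem neN_typ : ∀ (t : Lm), NeN t → ∀ τ, ∃ Γ n, DerN Γ t τ n
  | .var k, _, τ => ⟨_, _, .ax k τ⟩
  | .app t u, h, τ => by
    cases h with
    | app _ h =>
      obtain ⟨Γ, n, h1⟩ := neN_typ t h (Ty.arr [] τ)
      exact ⟨_, _, derN_app.2 ⟨_, _, [], _, _, h1, .nil, rfl, rfl⟩⟩
  | .lam t, h, _ => by cases h
  | .esub t u, h, _ => by cases h

theorem noN_typ : ∀ (t : Lm), NoN t → ∃ Γ τ n, DerN Γ t τ n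
  | .lam t, h => by
    cases h with
    | lam h =>
      obtain ⟨Γ, τ, n, h1⟩ := noN_typ t h
      exact ⟨_, _, _, .abs (Γ 0).toList h1 (Multiset.coe_toList _)⟩
    | ne h => cases h
  | .var k, h => ⟨_, _, _, .ax k (.base 0)⟩
  | .app t u, h => by
    cases h with
    | ne h =>
      obtain ⟨Γ, n, h1⟩ := neN_typ _ h (.base 0)
      exact ⟨_, _, _, h1⟩
  | .esub t u, h => by
    cases h with
    | ne h => cases h

theorem mainN (t : Lm) : (∃ (Γ : Ctx) (τ : Ty) (n : ℕ), DerN Γ t τ n) ↔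
      (∃ p : Lm, Relation.ReflTransGen (fun a b => ∃ r, StepN r a b) t p ∧
        ∀ (u : Lm) (r : NRule), ¬ StepN r p u) := by
  constructor
  · rintro ⟨Γ, τ, n, h⟩
    obtain ⟨p, h1, h2⟩ := Sys.norm_of_typed (S := SN) (Step := fun a b => ∃ r, StepN r a b)
      (fun a b ⟨r, h⟩ => redN h) n Γ t τ h
    exact ⟨p, h1, fun u r h => h2 u ⟨r, h⟩⟩
  · rintro ⟨p, h1, h2⟩
    refine Sys.typed_of_red (S := SN) (Step := fun a b => ∃ r, StepN r a b)
      (fun a b ⟨r, h⟩ => redN h) h1 ?_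
    apply noN_typ
    rcases nfN p h2 with h | ⟨s, rfl, h⟩
    · exact .ne h
    · exact .lam h

/-! ### system V -/

def ValP : Lm → Ctx → Ty → ℕ → Prop
  | var k, D, τ, m => D = Ctx.single k {τ} ∧ m = 1
  | lam t, D, τ', m => ∃ Γ n M τ, DerV Γ t τ n ∧
      Multiset.ofList M = Γ 0 ∧ D = Ctx.tail Γ ∧ τ' = Ty.arr M τ ∧ m = n + 1
  | _, _, _, _ => False

abbrev AV (u : Lm) (M : List Ty) (Δ : Ctx) (m : ℕ) : Prop := DerV Δ u (Ty.mult M) m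

theorem derV_val {v} (hv : IsVal v) {Γ τ n} : DerV Γ v τ n ↔
    ∃ M, τ = Ty.mult M ∧ Many (ValP v) M Γ n := by
  cases v with
  | app t u => exact hv.elim
  | esub t u => exact hv.elim
  | var k =>
    have : ValP (var k) = (fun D τ m => D = Ctx.single k {τ} ∧ m = 1) := by
      funext D τ m; simp [ValP]
    simp only [this, many_var]
    constructor
    · intro h; cases h; exact ⟨_, rfl, rfl, rfl⟩
    · rintro ⟨M, rfl, rfl, rfl⟩; exact .ax _ _
  | lam t =>
    constructor
    · intro h
      cases h with
      | abs prs h1 h2 =>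
        refine ⟨_, rfl, ?_⟩
        induction prs with
        | nil => exact .nil
        | cons p prs ih =>
          have h3 := ih (fun q hq => h2 q (by simp [hq])) (fun q hq => h1 q (by simp [hq]))
          have h4 : ValP (lam t) (Ctx.tail p.1) (Ty.arr p.2.1 p.2.2.1) (p.2.2.2 + 1) :=
            ⟨_, _, _, _, h1 p (by simp), h2 p (by simp), rfl, rfl, rfl⟩
          have h5 := Many.cons h4 h3
          have h6 : (List.map (fun x : Ctx × List Ty × Ty × ℕ => x.2.2.2) (p :: prs)).sum + (p :: prs).length = p.2.2.2 + 1 + ((List.map (fun x : Ctx × List Ty × Ty × ℕ => x.2.2.2) prs).sum + prs.length) := by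
            simp only [List.map_cons, List.sum_cons, List.length_cons]; omega
          rw [h6]; simpa only [List.map_cons, List.sum_cons] using h5
    · rintro ⟨M, rfl, h⟩
      have : ∃ prs : List (Ctx × List Ty × Ty × ℕ),
          (∀ p ∈ prs, DerV p.1 t p.2.2.1 p.2.2.2) ∧
          (∀ p ∈ prs, Multiset.ofList p.2.1 = p.1 0) ∧
          Γ = (prs.map (fun p => Ctx.tail p.1)).sum ∧
          M = prs.map (fun p => Ty.arr p.2.1 p.2.2.1) ∧
          n = (prs.map (·.2.2.2)).sum + prs.length := by
        induction h with
        | nil => exact ⟨[], by simp⟩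
        | cons h _ ih =>
          obtain ⟨Γ, n, M, τ, a, b, rfl, rfl, rfl⟩ := h
          obtain ⟨prs, h1, h2, rfl, rfl, rfl⟩ := ih
          refine ⟨(Γ, M, τ, n) :: prs, ?_, ?_, ?_, ?_, ?_⟩
          · intro p hp
            rcases List.mem_cons.1 hp with rfl | hp
            · exact a
            · exact h1 p hp
          · intro p hp
            rcases List.mem_cons.1 hp with rfl | hp
            · exact b
            · exact h2 p hp
          · simp
          · simp
          · simp only [List.map_cons, List.sum_cons, List.length_cons]; omega
      obtain ⟨prs, h1, h2, rfl, rfl, rfl⟩ := this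
      exact .abs prs h1 h2

theorem valP_iff {v} (hv : IsVal v) {D τ n} : ValP v D τ n ↔ DerV D v (Ty.mult [τ]) n := by
  rw [derV_val hv]
  constructor
  · intro h; exact ⟨_, rfl, many_single.2 h⟩
  · rintro ⟨M, h1, h2⟩
    cases h1
    exact many_single.1 h2

theorem derV_app {t u Γ' τ n'} : DerV Γ' (app t u) τ n' ↔ ∃ Γ n M Δ m,
    DerV Γ t (Ty.mult [Ty.arr M τ]) n ∧ AV u M Δ m ∧ Γ' = Γ + Δ ∧ n' = n + m + 1 := by
  constructor
  · intro h; cases h with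
    | app h h2 => exact ⟨_, _, _, _, _, h, h2, rfl, rfl⟩
  · rintro ⟨Γ, n, M, Δ, m, h, h2, rfl, rfl⟩
    exact .app h h2

theorem derV_es {t u Γ' τ n'} : DerV Γ' (esub t u) τ n' ↔ ∃ Γ n M Δ m, DerV Γ t τ n ∧
    AV u M Δ m ∧ Multiset.ofList M = Γ 0 ∧ Γ' = Ctx.tail Γ + Δ ∧ n' = n + m + 1 := by
  constructor
  · intro h; cases h with
    | es h h1 h2 => exact ⟨_, _, _, _, _, h, h1, h2, rfl, rfl⟩
  · rintro ⟨Γ, n, M, Δ, m, h, h2, h1, rfl, rfl⟩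
    exact .es h h2 h1

theorem valP_pos {v D τ n} (h : ValP v D τ n) : ∃ m, n = m + 1 := by
  cases v with
  | app t u => exact h.elim
  | esub t u => exact h.elim
  | var k => exact ⟨0, h.2⟩
  | lam t => obtain ⟨Γ, n, M, τ, _, _, _, _, rfl⟩ := h; exact ⟨_, rfl⟩

def EV (u : Lm) (D : Ctx) (τ : Ty) (m : ℕ) : Prop := ValP u D τ (m + 1)

theorem varOK_V : VarOK EV := by
  intro k D τ m
  simp [EV, ValP]

theorem val_sub {σ v v'} (hv : IsVal v) (hv' : IsVal v')
    (H : ∀ D τ n', ValP v' D τ n' ↔ ∃ Γ n m, ValP v Γ τ n ∧ SubT EV σ Γ D m ∧ n' = n + m)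
    (Δ τ n') : DerV Δ v' τ n' ↔ ∃ Γ n m, DerV Γ v τ n ∧ SubT EV σ Γ Δ m ∧ n' = n + m := by
  have hA := fun M Δ n' => many_sub (M := M) (Δ := Δ) (n' := n') H
  rw [derV_val hv']
  constructor
  · rintro ⟨M, rfl, h⟩
    obtain ⟨Γ, n, m, h1, h2, rfl⟩ := (hA _ _ _).1 h
    exact ⟨_, _, _, (derV_val hv).2 ⟨_, rfl, h1⟩, h2, rfl⟩
  · rintro ⟨Γ, n, m, h, h2, rfl⟩
    obtain ⟨M, rfl, h1⟩ := (derV_val hv).1 h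
    exact ⟨M, rfl, (hA _ _ _).2 ⟨_, _, _, h1, h2, rfl⟩⟩

theorem substV {G : (ℕ → Lm) → Prop}
    (hG : ∀ σ, G σ → LiftOK EV σ ∧ G (liftS σ) ∧ ∀ k, IsVal (σ k)) (t : Lm) :
    ∀ σ, G σ → ∀ Δ τ n', DerV Δ (subst σ t) τ n' ↔
      ∃ Γ n m, DerV Γ t τ n ∧ SubT EV σ Γ Δ m ∧ n' = n + m := by
  induction t with
  | var k =>
    intro σ hσ
    refine val_sub trivial ((hG σ hσ).2.2 k) ?_
    intro D τ n'
    constructor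
    · intro h
      obtain ⟨m, rfl⟩ := valP_pos h
      exact ⟨_, 1, m, ⟨rfl, rfl⟩, subT_single.2 h, by ring⟩
    · rintro ⟨Γ, n, m, h1, h2, rfl⟩
      obtain ⟨rfl, rfl⟩ := h1
      rw [add_comm]
      exact (subT_single (E := EV)).1 h2
  | lam t ih =>
    intro σ hσ
    obtain ⟨hL, hσ', _⟩ := hG σ hσ
    refine val_sub (v' := lam (subst (liftS σ) t)) trivial trivial ?_
    intro Δ τ n'
    constructor
    · intro h
      obtain ⟨Γ', n', M, τ, h1, h2, rfl, rfl, rfl⟩ := h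
      obtain ⟨Γ, n, m, h6, h3, rfl⟩ := (ih _ hσ' _ _ _).1 h1
      obtain ⟨h4, h5⟩ := h3.unlift varOK_V hL
      exact ⟨_, _, m, ⟨_, _, M, _, h6, by rw [h4, h2], rfl, rfl, rfl⟩, h5, by ring⟩
    · rintro ⟨Γ, n, m, h1, h2, rfl⟩
      obtain ⟨Γ, n, M, τ, h5, h3, rfl, rfl, rfl⟩ := h1
      have h4 := h2.lift varOK_V hL (Γ 0)
      rw [cons_tail] at h4
      exact ⟨_, _, M, _, (ih _ hσ' _ _ _).2 ⟨_, _, _, h5, h4, rfl⟩, h3, rfl, rfl,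
        by ring⟩
  | app t u iht ihu =>
    intro σ hσ Δ τ n'
    simp only [subst]
    constructor
    · intro h
      obtain ⟨Γ, n, M, Δ, m, h1, h2, rfl, rfl⟩ := derV_app.1 h
      obtain ⟨Γ1, n1, m1, h5, h3, rfl⟩ := (iht σ hσ _ _ _).1 h1
      obtain ⟨Γ2, n2, m2, h6, h4, rfl⟩ := (ihu σ hσ _ _ _).1 h2
      exact ⟨_, _, _, derV_app.2 ⟨_, _, _, _, _, h5, h6, rfl, rfl⟩, h3.plus h4, by ring⟩
    · rintro ⟨Γ, n, m, h1, h2, rfl⟩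
      obtain ⟨Γ, n, M, Δ, m, h5, h3, rfl, rfl⟩ := derV_app.1 h1
      obtain ⟨Δ₁, Δ₂, m₁, m₂, a, b, rfl, rfl⟩ := h2.split rfl
      exact derV_app.2 ⟨_, _, _, _, _, (iht σ hσ _ _ _).2 ⟨_, _, _, h5, a, rfl⟩,
        (ihu σ hσ _ _ _).2 ⟨_, _, _, h3, b, rfl⟩, rfl, by ring⟩
  | esub t u iht ihu =>
    intro σ hσ Δ τ n'
    obtain ⟨hL, hσ', _⟩ := hG σ hσ
    simp only [subst]
    constructor
    · intro h
      obtain ⟨Γ, n, M, Δ, m, h1, h2, h5, rfl, rfl⟩ := derV_es.1 h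
      obtain ⟨Γ1, n1, m1, h8, h3, rfl⟩ := (iht _ hσ' _ _ _).1 h1
      obtain ⟨Γ2, n2, m2, h9, h4, rfl⟩ := (ihu σ hσ _ _ _).1 h2
      obtain ⟨h6, h7⟩ := h3.unlift varOK_V hL
      exact ⟨_, _, _, derV_es.2 ⟨_, _, _, _, _, h8, h9, by rw [h6, h5], rfl, rfl⟩,
        h7.plus h4, by ring⟩
    · rintro ⟨Γ, n, m, h1, h2, rfl⟩
      obtain ⟨Γ, n, M, Δ, m, h8, h3, h5, rfl, rfl⟩ := derV_es.1 h1
      obtain ⟨Δ₁, Δ₂, m₁, m₂, a, b, rfl, rfl⟩ := h2.split rfl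
      have h4 := a.lift varOK_V hL (Γ 0)
      rw [cons_tail] at h4
      exact derV_es.2 ⟨_, _, _, _, _, (iht _ hσ' _ _ _).2 ⟨_, _, _, h8, h4, rfl⟩,
        (ihu σ hσ _ _ _).2 ⟨_, _, _, h3, b, rfl⟩, h5, rfl, by ring⟩

theorem substV_var (t : Lm) : ∀ σ, GV σ → ∀ Δ τ n', DerV Δ (subst σ t) τ n' ↔
    ∃ Γ n m, DerV Γ t τ n ∧ SubT EV σ Γ Δ m ∧ n' = n + m :=
  substV (G := GV) (fun _ h => ⟨h.ok varOK_V, h.lift, fun k => by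
    obtain ⟨j, hj⟩ := h k; rw [hj]; trivial⟩) t

theorem renameV {f F} (hF : IsRen f F) (t Δ τ n) :
    DerV Δ (rename f t) τ n ↔ ∃ Γ, DerV Γ t τ n ∧ Δ = F Γ :=
  rename_gen varOK_V substV_var hF t Δ τ n

theorem substV_all (t : Lm) : ∀ σ, (∀ k, IsVal (σ k)) → ∀ Δ τ n', DerV Δ (subst σ t) τ n' ↔
    ∃ Γ n m, DerV Γ t τ n ∧ SubT EV σ Γ Δ m ∧ n' = n + m :=
  substV (G := fun σ => ∀ k, IsVal (σ k)) (fun σ h => ⟨fun k D τ m => by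
      simp only [EV, valP_iff (isVal_rename _ (h k)), valP_iff (h k)]
      exact renameV isRen_sh (σ k) D _ (m + 1),
    fun k => by
      cases k with
      | zero => trivial
      | succ k => exact isVal_rename _ (h k), h⟩) t

def SV : Sys where
  D := DerV
  A := AV
  ar := fun M τ => Ty.mult [Ty.arr M τ]
  app_iff := derV_app
  es_iff := derV_es
  lam_iff := by
    intro t Γ' M τ n'
    rw [← valP_iff (v := lam t) trivial]
    constructor
    · rintro ⟨Γ, n, M', τ', h1, h2, rfl, h3, rfl⟩
      cases h3
      exact ⟨_, _, h1, h2, rfl, rfl⟩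
    · rintro ⟨Γ, n, h1, h2, rfl, rfl⟩
      exact ⟨_, _, _, _, h1, h2, rfl, rfl, rfl⟩
  renA := renameV isRen_sh _ _ _ _

theorem redV_sv0 (t v : Lm) (hv : IsVal v) : SV.Red (esub t v) (substIn 0 v t) := by
  have hσ : ∀ k, IsVal ((fun k => match k with | 0 => v | k + 1 => var (k + 0) : ℕ → Lm) k) := by
    intro k
    cases k with
    | zero => exact hv
    | succ k => trivial
  constructor
  · intro Γ τ n h
    obtain ⟨Γ, n, M, Δ, m, h1, h2, h3, rfl, rfl⟩ := derV_es.1 h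
    obtain ⟨M', hM, h7⟩ := (derV_val hv).1 h2
    cases hM
    obtain ⟨m', hm, h4⟩ := subT_zero_fwd (E := EV) (u := v)
      (σ := fun k => match k with | 0 => v | k + 1 => var (k + 0)) rfl
      (fun D τ n h => by obtain ⟨m, rfl⟩ := valP_pos h; exact ⟨m, rfl, h⟩) h7
    have h5 := (fin_gen varOK_V substV_var h1).shift
      (σ' := fun k => match k with | 0 => v | k + 1 => var (k + 0)) (fun _ => rfl)
    have h6 := h4.plus h5
    rw [← cons_split, h3, cons_tail, add_comm Δ] at h6
    exact ⟨n + (m' + 0), by omega, (substV_all t _ hσ _ _ _).2 ⟨_, _, _, h1, h6, rfl⟩⟩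
  · intro Γ τ n h
    obtain ⟨Γ, n, m, h1, h2, rfl⟩ := (substV_all t _ hσ _ _ _).1 h
    obtain ⟨M, Θ, q, h3, h4, rfl⟩ := subT_zero_bwd varOK_V (u := v)
      (P := ValP v) rfl (fun _ => rfl) (fun _ _ _ h => h) h2
    exact ⟨_, derV_es.2 ⟨_, _, _, _, _, h1, (derV_val hv).2 ⟨_, rfl, h3⟩, h4, rfl, rfl⟩⟩

theorem esub_esub (t s e : Lm) (Γ τ n) : SV.D Γ (esub t (esub s e)) τ n ↔
    SV.D Γ (esub (esub (rename (liftR (· + 1)) t) s) e) τ n := by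
  change DerV _ _ _ _ ↔ DerV _ _ _ _
  constructor
  · intro h
    obtain ⟨Γ, n, M, Δ, m, h1, h2, h3, rfl, rfl⟩ := derV_es.1 h
    obtain ⟨Δ, m, M', Θ, q, h4, h5, h6, rfl, rfl⟩ := derV_es.1 h2
    refine derV_es.2 ⟨_, _, _, _, _, derV_es.2 ⟨_, _, _, _, _,
      (renameV isRen_sh1 t _ _ _).2 ⟨_, h1, rfl⟩, h4, ?_, rfl, rfl⟩, h5, ?_, ?_, ?_⟩
    · simp [sh1, h3]
    · simp [sh1, h6]
    · simp [sh1, add_assoc]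
    · ring
  · intro h
    obtain ⟨Γ, n, M, Δ, m, h1, h2, h3, rfl, rfl⟩ := derV_es.1 h
    obtain ⟨Γ, n, M', Θ, q, h4, h5, h6, rfl, rfl⟩ := derV_es.1 h1
    obtain ⟨Γ, h7, rfl⟩ := (renameV isRen_sh1 t _ _ _).1 h4
    refine derV_es.2 ⟨_, _, _, _, _, h7, derV_es.2 ⟨_, _, _, _, _, h5, h2, ?_, rfl, rfl⟩,
      ?_, ?_, ?_⟩
    · simpa [sh1] using h3
    · simpa [sh1] using h6
    · simp [sh1, add_assoc]
    · ring

theorem redV_sv (v : Lm) (hv : IsVal v) (L : List Lm) : ∀ (t : Lm),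
    SV.Red (esub t (plug L v)) (plug L (substIn L.length v t)) := by
  induction L with
  | nil => exact fun t => redV_sv0 t v hv
  | cons e L ih =>
    intro t
    have h := (ih (rename (liftR (· + 1)) t)).esubL e
    rw [← substIn_succ] at h
    exact h.of_iso (esub_esub _ _ _)

theorem redV {r a b} (h : StepV r a b) : SV.Red a b := by
  induction h with
  | dB L t u => exact Sys.red_dB L t u
  | sv L t v hv => exact redV_sv v hv L t
  | appL u _ ih => exact ih.appL u
  | esubL u _ ih => exact ih.esubL u
  | appR t _ ih =>
    constructor
    · intro Γ τ n h0
      obtain ⟨Γ, n, M, Δ, m, h1, h2, rfl, rfl⟩ := derV_app.1 h0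
      obtain ⟨n', hn, h4⟩ := ih.1 _ _ _ h2
      exact ⟨_, by omega, derV_app.2 ⟨Γ, n, M, Δ, n', h1, h4, rfl, rfl⟩⟩
    · intro Γ τ n h0
      obtain ⟨Γ, n, M, Δ, m, h1, h2, rfl, rfl⟩ := derV_app.1 h0
      obtain ⟨n', h4⟩ := ih.2 _ _ _ h2
      exact ⟨_, derV_app.2 ⟨Γ, n, M, Δ, n', h1, h4, rfl, rfl⟩⟩
  | esubR t _ ih =>
    constructor
    · intro Γ τ n h0
      obtain ⟨Γ, n, M, Δ, m, h1, h2, h3, rfl, rfl⟩ := derV_es.1 h0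
      obtain ⟨n', hn, h4⟩ := ih.1 _ _ _ h2
      exact ⟨_, by omega, derV_es.2 ⟨Γ, n, M, Δ, n', h1, h4, h3, rfl, rfl⟩⟩
    · intro Γ τ n h0
      obtain ⟨Γ, n, M, Δ, m, h1, h2, h3, rfl, rfl⟩ := derV_es.1 h0
      obtain ⟨n', h4⟩ := ih.2 _ _ _ h2
      exact ⟨_, derV_es.2 ⟨Γ, n, M, Δ, n', h1, h4, h3, rfl, rfl⟩⟩

theorem vsize_le {t Γ τ n} (h : DerV Γ t τ n) : vsize t ≤ n := by
  induction h <;> simp only [vsize] <;> omega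

theorem boundV {t q p} (h : RedCntV t q p) : ∀ {Γ τ n}, DerV Γ t τ n →
    q.1 + q.2 + vsize p ≤ n := by
  induction h with
  | refl t => intro Γ τ n h; simpa using vsize_le h
  | db hs _ ih =>
    intro Γ τ n h
    obtain ⟨n', hn, h'⟩ := (redV hs).1 _ _ _ h
    have := ih h'
    simp only at this ⊢
    omega
  | sv hs _ ih =>
    intro Γ τ n h
    obtain ⟨n', hn, h'⟩ := (redV hs).1 _ _ _ h
    have := ih h'
    simp only at this ⊢
    omega

theorem vr_plug (t : Lm) (h : VrV t) : ∃ L k, t = plug L (var k) := by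
  induction t with
  | var k => exact ⟨[], k, rfl⟩
  | app t u => cases h
  | lam t => cases h
  | esub t u ih _ =>
    cases h with
    | esub h _ =>
      obtain ⟨L, k, rfl⟩ := ih h
      exact ⟨u :: L, k, rfl⟩

theorem nfV (t : Lm) (h : ∀ u r, ¬ StepV r t u) :
    VrV t ∨ NeV t ∨ (NoV t ∧ ∃ L s, t = plug L (lam s)) := by
  induction t with
  | var k => exact .inl (.var k)
  | lam t => exact .inr (.inr ⟨.lam t, [], t, rfl⟩)
  | app t u iht ihu =>
    have hu : NoV u := by
      rcases ihu (fun _ _ hs => h _ _ (.appR _ hs)) with h1 | h1 | h1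
      · exact .vr h1
      · exact .ne h1
      · exact h1.1
    rcases iht (fun _ _ hs => h _ _ (.appL _ hs)) with h1 | h1 | ⟨_, L, s, rfl⟩
    · exact .inr (.inl (.app₁ h1 hu))
    · exact .inr (.inl (.app₂ h1 hu))
    · exact absurd (StepV.dB L s u) (h _ _)
  | esub t u iht ihu =>
    have hu : NeV u := by
      rcases ihu (fun _ _ hs => h _ _ (.esubR _ hs)) with h1 | h1 | ⟨_, L, s, rfl⟩
      · obtain ⟨L, k, rfl⟩ := vr_plug _ h1
        exact absurd (StepV.sv L t (var k) trivial) (h _ _)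
      · exact h1
      · exact absurd (StepV.sv L t (lam s) trivial) (h _ _)
    rcases iht (fun _ _ hs => h _ _ (.esubL _ hs)) with h1 | h1 | ⟨h1, L, s, rfl⟩
    · exact .inl (.esub h1 hu)
    · exact .inr (.inl (.esub h1 hu))
    · exact .inr (.inr ⟨.esub h1 hu, u :: L, s, rfl⟩)

theorem esV_typ {t u τ} (h1 : ∃ Γ n, DerV Γ t τ n) (h2 : ∀ τ, ∃ Γ n, DerV Γ u τ n) :
    ∃ Γ n, DerV Γ (esub t u) τ n := by
  obtain ⟨Γ, n, h1⟩ := h1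
  obtain ⟨Δ, m, h2⟩ := h2 (.mult (Γ 0).toList)
  exact ⟨_, _, .es h1 h2 (Multiset.coe_toList _)⟩

theorem typV (t : Lm) : (VrV t → ∀ M, ∃ Γ n, DerV Γ t (.mult M) n) ∧
    (NeV t → ∀ τ, ∃ Γ n, DerV Γ t τ n) ∧ (NoV t → ∃ Γ n, DerV Γ t (.mult []) n) := by
  have fin : ∀ t, (VrV t → ∀ M, ∃ Γ n, DerV Γ t (.mult M) n) →
      (NeV t → ∀ τ, ∃ Γ n, DerV Γ t τ n) →
      ((∃ s, t = lam s) ∨ (∃ s u, t = esub s u ∧ NoV s ∧ NeV u) →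
        ∃ Γ n, DerV Γ t (.mult []) n) →
      (NoV t → ∃ Γ n, DerV Γ t (.mult []) n) := by
    intro t h1 h2 h3 h
    cases h with
    | lam s => exact h3 (.inl ⟨s, rfl⟩)
    | vr h => exact h1 h []
    | ne h => exact h2 h _
    | esub a b => exact h3 (.inr ⟨_, _, rfl, a, b⟩)
  induction t with
  | var k =>
    refine ⟨fun _ M => ⟨_, _, .ax k M⟩, ?_, fun _ => ⟨_, _, .ax k []⟩⟩
    intro h; cases h
  | lam t =>
    refine ⟨?_, ?_, fun _ => ⟨_, _, .abs [] (by simp) (by simp)⟩⟩ <;> intro h <;> cases h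
  | app t u iht ihu =>
    have h1 : VrV (app t u) → ∀ M, ∃ Γ n, DerV Γ (app t u) (.mult M) n := by
      intro h; cases h
    have h2 : NeV (app t u) → ∀ τ, ∃ Γ n, DerV Γ (app t u) τ n := by
      intro h τ
      cases h with
      | app₁ a b =>
        obtain ⟨Γ, n, a⟩ := iht.1 a [.arr [] τ]
        obtain ⟨Δ, m, b⟩ := ihu.2.2 b
        exact ⟨_, _, .app a b⟩
      | app₂ a b =>
        obtain ⟨Γ, n, a⟩ := iht.2.1 a (.mult [.arr [] τ])
        obtain ⟨Δ, m, b⟩ := ihu.2.2 b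
        exact ⟨_, _, .app a b⟩
    refine ⟨h1, h2, fin _ h1 h2 ?_⟩
    rintro (⟨s, hs⟩ | ⟨s, u, hs, _⟩) <;> cases hs
  | esub t u iht ihu =>
    have h1 : VrV (esub t u) → ∀ M, ∃ Γ n, DerV Γ (esub t u) (.mult M) n := by
      intro h M
      cases h with
      | esub a b => exact esV_typ (iht.1 a M) (ihu.2.1 b)
    have h2 : NeV (esub t u) → ∀ τ, ∃ Γ n, DerV Γ (esub t u) τ n := by
      intro h M
      cases h with
      | esub a b => exact esV_typ (iht.2.1 a M) (ihu.2.1 b)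
    refine ⟨h1, h2, fin _ h1 h2 ?_⟩
    rintro (⟨s, hs⟩ | ⟨s, u, hs, a, b⟩) <;> cases hs
    exact esV_typ (iht.2.2 a) (ihu.2.1 b)

theorem mainV (t : Lm) : (∃ (Γ : Ctx) (τ : Ty) (n : ℕ), DerV Γ t τ n) ↔
      (∃ p : Lm, Relation.ReflTransGen (fun a b => ∃ r, StepV r a b) t p ∧
        ∀ (u : Lm) (r : VRule), ¬ StepV r p u) := by
  constructor
  · rintro ⟨Γ, τ, n, h⟩
    obtain ⟨p, h1, h2⟩ := Sys.norm_of_typed (S := SV) (Step := fun a b => ∃ r, StepV r a b)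
      (fun a b ⟨r, h⟩ => redV h) n Γ t τ h
    exact ⟨p, h1, fun u r h => h2 u ⟨r, h⟩⟩
  · rintro ⟨p, h1, h2⟩
    refine Sys.typed_of_red (S := SV) (Step := fun a b => ∃ r, StepV r a b)
      (fun a b ⟨r, h⟩ => redV h) h1 ?_
    have hp : NoV p := by
      rcases nfV p h2 with h | h | h
      · exact .vr h
      · exact .ne h
      · exact h.1
    obtain ⟨Γ, n, h⟩ := (typV p).2.2 hp
    exact ⟨_, _, _, h⟩

end NV
/-- **Characterisation of CBN and CBV normalisation** (Theorem 5):
`t` is 𝒩-typable iff `t` is `→n`-normalising, with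
`|Φ|_n ≥ b + e + |p|_n` for any 𝒩-derivation `Φ` and any normalising
reduction `t →n* p` with `b` dB-steps and `e` s-steps; and symmetrically for
system 𝒱 and `→v`. -/
theorem cbn_cbv_normalisation (t : Lm) :
    ((∃ (Γ : Ctx) (τ : Ty) (n : ℕ), DerN Γ t τ n) ↔
      (∃ p : Lm, Relation.ReflTransGen (fun a b => ∃ r, StepN r a b) t p ∧
        ∀ (u : Lm) (r : NRule), ¬ StepN r p u)) ∧
    (∀ (Γ : Ctx) (τ : Ty) (n : ℕ) (p : Lm) (b e : ℕ),
      DerN Γ t τ n → RedCntN t (b, e) p →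
      (∀ (u : Lm) (r : NRule), ¬ StepN r p u) →
      n ≥ b + e + Lm.nsize p) ∧
    ((∃ (Γ : Ctx) (τ : Ty) (n : ℕ), DerV Γ t τ n) ↔
      (∃ p : Lm, Relation.ReflTransGen (fun a b => ∃ r, StepV r a b) t p ∧
        ∀ (u : Lm) (r : VRule), ¬ StepV r p u)) ∧
    (∀ (Γ : Ctx) (τ : Ty) (n : ℕ) (p : Lm) (b e : ℕ),
      DerV Γ t τ n → RedCntV t (b, e) p →
      (∀ (u : Lm) (r : VRule), ¬ StepV r p u) →
      n ≥ b + e + Lm.vsize p) := by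
  exact ⟨NV.mainN t, fun Γ τ n p b e h1 h2 _ => NV.boundN h2 h1, NV.mainV t,
    fun Γ τ n p b e h1 h2 _ => NV.boundV h2 h1⟩
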